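/- arXiv:1210.8413 — 6 statements merged into one kernel-verified Lean document; each statement's English description precedes it below -/
import Mathlib

section
/- Let K be a field, let n ≥ 2, and let p, q ∈ Kˣ. The single parameter quantum matrix algebras O_p(M_n(K)) and O_q(M_n(K)) are isomorphic as K-algebras if and only if p = q or p = q⁻¹. -/
/-- The defining relations of the single parameter quantum matrix algebra
`O_p(M_n(K))`, on generators `X (i,j)`, `1 ≤ i,j ≤ n`:
`X_{ij}X_{lm} = p·X_{lm}X_{ij}` if (`i > l`, `j = m`) or (`i = l`, `j > m`);
`X_{ij}X_{lm} = X_{lm}X_{ij}` if `i > l`, `j < m`;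
`X_{ij}X_{lm} = X_{lm}X_{ij} + (p - p⁻¹)·X_{im}X_{lj}` if `i > l`, `j > m`. -/
inductive QMatRel (K : Type*) [Field K] (n : ℕ) (p : K) :
    FreeAlgebra K (Fin n × Fin n) → FreeAlgebra K (Fin n × Fin n) → Prop
  | col (i l j : Fin n) (h : l < i) :
      QMatRel K n p (FreeAlgebra.ι K (i, j) * FreeAlgebra.ι K (l, j))
        (p • (FreeAlgebra.ι K (l, j) * FreeAlgebra.ι K (i, j)))
  | row (i j m : Fin n) (h : m < j) :
      QMatRel K n p (FreeAlgebra.ι K (i, j) * FreeAlgebra.ι K (i, m))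
        (p • (FreeAlgebra.ι K (i, m) * FreeAlgebra.ι K (i, j)))
  | comm (i l j m : Fin n) (h1 : l < i) (h2 : j < m) :
      QMatRel K n p (FreeAlgebra.ι K (i, j) * FreeAlgebra.ι K (l, m))
        (FreeAlgebra.ι K (l, m) * FreeAlgebra.ι K (i, j))
  | quantum (i l j m : Fin n) (h1 : l < i) (h2 : m < j) :
      QMatRel K n p (FreeAlgebra.ι K (i, j) * FreeAlgebra.ι K (l, m))
        (FreeAlgebra.ι K (l, m) * FreeAlgebra.ι K (i, j) +
          (p - p⁻¹) • (FreeAlgebra.ι K (i, m) * FreeAlgebra.ι K (l, j)))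

/-- The single parameter quantum matrix algebra `O_p(M_n(K))`. -/
abbrev QMat (K : Type*) [Field K] (n : ℕ) (p : K) := RingQuot (QMatRel K n p)

/-!
Write a quadratic relation `x * y = p • (y * x)` with `p ≠ 1` between two elements of `O_q(M_n(K))`.
Modulo the square of the augmentation ideal the algebra is commutative, so if the linear parts `u`
and `v` of `x` and `y` are nonzero, then their constant terms vanish and the relation is governed
by `u` and `v` alone: `B u v = p * B v u` for every functional `B` on the quadratic part of
`O_q(M_n(K))`. Comparing the leading terms of `u` and `v` in the lexicographic order, which
commute up to `1`, `q` or `q⁻¹`, gives `p = q` or `p = q⁻¹`. An isomorphism from `O_p(M_n(K))`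
carries two generators of one row to such a pair `x`, `y`, because the linear parts of the images
of all `n ^ 2` generators form a basis. Conversely, reversing the order of rows and columns inverts
the parameter.
-/

section CommutativeQuotients

variable {K : Type*} [Field K]

lemma mul_eq_zero_of_mul_eq_smul_mul {A : Type*} [CommRing A] [Algebra K A] {p : K} (hp : p ≠ 1)
    {x y : A} (h : x * y = p • (y * x)) : x * y = 0 := by
  rw [mul_comm y x] at h
  have h' : (1 - p) • (x * y) = 0 := by rw [sub_smul, one_smul, ← h, sub_self]
  exact (smul_eq_zero.1 h').resolve_left (sub_ne_zero.2 hp.symm)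

variable {V : Type*} [AddCommGroup V] [Module K V] [Module Kᵐᵒᵖ V] [IsCentralScalar K V]

lemma fst_eq_zero_of_mul_eq_zero_of_snd_ne_zero {x y : TrivSqZeroExt K V} (h : x * y = 0)
    (hx : x.snd ≠ 0) : y.fst = 0 := by
  have hfst : x.fst * y.fst = 0 := by simpa using congrArg TrivSqZeroExt.fst h
  have hsnd : x.fst • y.snd + y.fst • x.snd = 0 := by
    simpa using congrArg TrivSqZeroExt.snd h
  by_contra hy
  rw [(mul_eq_zero.1 hfst).resolve_right hy, zero_smul, zero_add] at hsnd
  exact (smul_eq_zero.1 hsnd).elim hy hx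

lemma snd_mem_span_of_adjoin_eq_top {A : Type*} [Ring A] [Algebra K A] {s : Set A}
    (hs : Algebra.adjoin K s = ⊤) (ψ : A →ₐ[K] TrivSqZeroExt K V) (z : A) :
    (ψ z).snd ∈ Submodule.span K ((fun a => (ψ a).snd) '' s) := by
  have hz : z ∈ Algebra.adjoin K s := hs ▸ Algebra.mem_top
  induction hz using Algebra.adjoin_induction with
  | mem x hx => exact Submodule.subset_span ⟨x, hx, rfl⟩
  | algebraMap k => simp [TrivSqZeroExt.algebraMap_eq_inl]
  | add x y _ _ hx hy => simpa using add_mem hx hy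
  | mul x y _ _ hx hy =>
    simpa using add_mem (Submodule.smul_mem _ _ hy) (Submodule.smul_mem _ _ hx)

end CommutativeQuotients

section Shift

variable {K V : Type*} [CommRing K] [AddCommGroup V] [Module K V]

/-- Left multiplication by the degree one element `w` in the algebra `K ⊕ V ⊕ K`, graded in degrees
`0, 1, 2`, whose product `V × V → K` is `B`. -/
def shift (B : LinearMap.BilinForm K V) (w : V) : Module.End K (K × V × K) where
  toFun x := (0, x.1 • w, B w x.2.1)
  map_add' x y := by simp [add_smul]
  map_smul' k x := by simp [mul_smul]

@[simp] lemma shift_apply (B : LinearMap.BilinForm K V) (w : V) (x : K × V × K) :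
    shift B w x = (0, x.1 • w, B w x.2.1) := rfl

lemma shift_mul_shift (B : LinearMap.BilinForm K V) (v w : V) :
    shift B v * shift B w = (LinearMap.fst K K (V × K)).smulRight (0, 0, B v w) := by
  ext <;> simp

end Shift

/-- The relations of the quantum matrix algebra with parameter `p`, imposed on a family `m` of
vectors in which `m a b` takes the place of the product `X a * X b`. Thus they can be asked both of
elements of an algebra and of the matrix of a bilinear form. -/
structure QuantumRelations {K ι M : Type*} [Field K] [LT ι] [AddCommGroup M] [Module K M] (p : K)
    (m : ι × ι → ι × ι → M) : Prop where
  col : ∀ i l j, l < i → m (i, j) (l, j) = p • m (l, j) (i, j)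
  row : ∀ i j k, k < j → m (i, j) (i, k) = p • m (i, k) (i, j)
  comm : ∀ i l j k, l < i → j < k → m (i, j) (l, k) = m (l, k) (i, j)
  quantum : ∀ i l j k, l < i → k < j →
    m (i, j) (l, k) = m (l, k) (i, j) + (p - p⁻¹) • m (i, k) (l, j)

namespace QuantumRelations

variable {K ι M N : Type*} [Field K] [AddCommGroup M] [Module K M] [AddCommGroup N] [Module K N]

protected lemma zero [LT ι] (p : K) :
    QuantumRelations p (fun _ _ : ι × ι => (0 : M)) := by
  constructor <;> simp

lemma map [LT ι] {p : K} {m : ι × ι → ι × ι → M} (hm : QuantumRelations p m) (φ : M →ₗ[K] N) :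
    QuantumRelations p (fun a b => φ (m a b)) where
  col i l j h := by simp [hm.col i l j h]
  row i j k h := by simp [hm.row i j k h]
  comm i l j k h h' := by simp [hm.comm i l j k h h']
  quantum i l j k h h' := by simp [hm.quantum i l j k h h']

lemma comp_strictAnti {κ : Type*} [Preorder ι] [Preorder κ] {f : ι → κ} (hf : StrictAnti f) {p : K}
    (hp : p ≠ 0) {m : κ × κ → κ × κ → M} (hm : QuantumRelations p m) :
    QuantumRelations p⁻¹ (fun a b : ι × ι => m (f a.1, f a.2) (f b.1, f b.2)) where
  col i l j h := by rw [hm.col _ _ _ (hf h), inv_smul_smul₀ hp]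
  row i j k h := by rw [hm.row _ _ _ (hf h), inv_smul_smul₀ hp]
  comm i l j k h h' := (hm.comm _ _ _ _ (hf h) (hf h')).symm
  quantum i l j k h h' := by
    rw [hm.quantum _ _ _ _ (hf h) (hf h'), hm.comm _ _ _ _ (hf h) (hf h'), inv_inv]
    module

end QuantumRelations

section QuadraticDual

variable {K ι : Type*} [Field K] [LinearOrder ι] (q : K)

open Matrix (single)

lemma quantumRelations_single_self (a : ι × ι) : QuantumRelations q (single a a (1 : K)) := by
  constructor <;> intros <;> simp only [Matrix.single_apply, smul_eq_mul] <;> grind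

lemma quantumRelations_col {i l : ι} (h : l < i) (j : ι) :
    QuantumRelations q
      (single (i, j) (l, j) q + single (l, j) (i, j) 1 : Matrix (ι × ι) (ι × ι) K) := by
  constructor <;> intros <;>
    simp only [Matrix.add_apply, Matrix.single_apply, smul_eq_mul] <;> grind

lemma quantumRelations_row (i : ι) {j k : ι} (h : k < j) :
    QuantumRelations q
      (single (i, j) (i, k) q + single (i, k) (i, j) 1 : Matrix (ι × ι) (ι × ι) K) := by
  constructor <;> intros <;>
    simp only [Matrix.add_apply, Matrix.single_apply, smul_eq_mul] <;> grind

lemma quantumRelations_diagonal {i l j k : ι} (h : l < i) (h' : k < j) :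
    QuantumRelations q
      (single (i, j) (l, k) 1 + single (l, k) (i, j) 1 : Matrix (ι × ι) (ι × ι) K) := by
  constructor <;> intros <;>
    simp only [Matrix.add_apply, Matrix.single_apply, smul_eq_mul] <;> grind

-- The last summand is forced by the term `(q - q⁻¹) X_{ik} X_{lj}` in the product `X_{ij} X_{lk}`.
lemma quantumRelations_antidiagonal {i l j k : ι} (h : l < i) (h' : k < j) :
    QuantumRelations q
      (single (i, k) (l, j) 1 + single (l, j) (i, k) 1 + single (i, j) (l, k) (q - q⁻¹) :
        Matrix (ι × ι) (ι × ι) K) := by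
  constructor <;> intros <;>
    simp only [Matrix.add_apply, Matrix.single_apply, smul_eq_mul] <;>
    grind (splits := 12)

end QuadraticDual

section LeadingIndex

variable {M ι : Type*} [Zero M]

/-- `a` is the largest index, in the lexicographic order, at which `u` does not vanish. -/
def IsLeadingIndex [LT ι] (u : ι × ι → M) (a : ι × ι) : Prop :=
  u a ≠ 0 ∧ ∀ c, toLex a < toLex c → u c = 0

lemma exists_isLeadingIndex [LinearOrder ι] [Finite ι] {u : ι × ι → M} (hu : u ≠ 0) :
    ∃ a, IsLeadingIndex u a := by
  obtain ⟨a, ha, hmax⟩ := (Set.toFinite (Function.support u)).exists_maximalFor toLex _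
    (Function.support_nonempty_iff.2 hu)
  refine ⟨a, ha, fun c hac => ?_⟩
  by_contra hc
  exact hac.not_ge (hmax hc hac.le)

end LeadingIndex

section LeadingTerms

open Matrix (toBilin' single)

lemma toBilin'_single_apply {R α : Type*} [CommSemiring R] [Fintype α] [DecidableEq α] (a b : α)
    (c : R) (u v : α → R) : toBilin' (single a b c) u v = u a * c * v b := by
  rw [Matrix.toBilin'_apply', Matrix.single_mulVec_eq, dotProduct_smul, dotProduct_single_one,
    smul_eq_mul]
  ring

variable {K ι : Type*} [Field K] [LinearOrder ι] [Fintype ι] {u v : ι × ι → K} {a b : ι × ι}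
  {p q : K}

lemma exists_toBilin'_eq_mul_leading (q : K) (hab : toLex b ≤ toLex a) :
    ∃ (c : K) (m : Matrix (ι × ι) (ι × ι) K), (c = 1 ∨ c = q) ∧ QuantumRelations q m ∧
      ∀ u v, IsLeadingIndex u a → IsLeadingIndex v b →
        toBilin' m u v = c * (u a * v b) ∧ toBilin' m v u = u a * v b := by
  rcases hab.eq_or_lt with hab | hab
  · obtain rfl : b = a := toLex_inj.1 hab
    refine ⟨1, _, .inl rfl, quantumRelations_single_self q b, fun u v _ _ => ?_⟩
    simp only [toBilin'_single_apply]
    constructor <;> ring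
  obtain ⟨i, j⟩ := a
  obtain ⟨l, k⟩ := b
  rcases Prod.Lex.toLex_lt_toLex.1 hab with h | ⟨rfl, h⟩
  · rcases lt_trichotomy j k with h' | rfl | h'
    · refine ⟨1, _, .inl rfl, quantumRelations_antidiagonal q h h', fun u v hu hv => ?_⟩
      have hu' : u (i, k) = 0 := hu.2 _ (Prod.Lex.toLex_lt_toLex.2 (.inr ⟨rfl, h'⟩))
      have hv' : v (i, k) = 0 := hv.2 _ (Prod.Lex.toLex_lt_toLex.2 (.inl h))
      simp only [map_add, LinearMap.add_apply, toBilin'_single_apply, hv.2 _ hab, hu', hv']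
      constructor <;> ring
    · refine ⟨q, _, .inr rfl, quantumRelations_col q h j, fun u v _ hv => ?_⟩
      simp only [map_add, LinearMap.add_apply, toBilin'_single_apply, hv.2 _ hab]
      constructor <;> ring
    · refine ⟨1, _, .inl rfl, quantumRelations_diagonal q h h', fun u v _ hv => ?_⟩
      simp only [map_add, LinearMap.add_apply, toBilin'_single_apply, hv.2 _ hab]
      constructor <;> ring
  · refine ⟨q, _, .inr rfl, quantumRelations_row q l h, fun u v _ hv => ?_⟩
    simp only [map_add, LinearMap.add_apply, toBilin'_single_apply, hv.2 _ hab]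
    constructor <;> ring

lemma eq_of_leadingIndex_le (hp : p ≠ 1) (hu : IsLeadingIndex u a) (hv : IsLeadingIndex v b)
    (hab : toLex b ≤ toLex a)
    (h : ∀ m : Matrix (ι × ι) (ι × ι) K, QuantumRelations q m →
      toBilin' m u v = p * toBilin' m v u) : p = q := by
  obtain ⟨c, m, hc, hm, hB⟩ := exists_toBilin'_eq_mul_leading q hab
  obtain ⟨huv, hvu⟩ := hB u v hu hv
  have hcp : c = p := mul_right_cancel₀ (mul_ne_zero hu.1 hv.1) (by rw [← huv, h m hm, hvu])
  exact hcp ▸ hc.resolve_left (hcp ▸ hp)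

lemma eq_or_eq_inv_of_forall_bilin (hp₀ : p ≠ 0) (hp : p ≠ 1) (hu : u ≠ 0) (hv : v ≠ 0)
    (h : ∀ m : Matrix (ι × ι) (ι × ι) K, QuantumRelations q m →
      toBilin' m u v = p * toBilin' m v u) : p = q ∨ p = q⁻¹ := by
  obtain ⟨a, ha⟩ := exists_isLeadingIndex hu
  obtain ⟨b, hb⟩ := exists_isLeadingIndex hv
  rcases le_total (toLex b) (toLex a) with hab | hba
  · exact .inl (eq_of_leadingIndex_le hp ha hb hab h)
  · have hinv : p⁻¹ = q := eq_of_leadingIndex_le (inv_ne_one.2 hp) hb ha hba fun m hm => by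
      rw [h m hm, inv_mul_cancel_left₀ hp₀]
    exact .inr (inv_eq_iff_eq_inv.1 hinv)

end LeadingTerms

namespace QMat

variable {K : Type*} [Field K] {n : ℕ} {p q : K}

section UniversalProperty

/-- The generator `X_{ij}` of `O_p(M_n(K))`, for `c = (i, j)`. -/
noncomputable def gen (p : K) (c : Fin n × Fin n) : QMat K n p :=
  RingQuot.mkAlgHom K (QMatRel K n p) (FreeAlgebra.ι K c)

lemma quantumRelations_gen (p : K) :
    QuantumRelations p (fun a b : Fin n × Fin n => gen p a * gen p b) where
  col i l j h := by
    simpa [gen] using RingQuot.mkAlgHom_rel K (QMatRel.col (p := p) i l j h)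
  row i j k h := by
    simpa [gen] using RingQuot.mkAlgHom_rel K (QMatRel.row (p := p) i j k h)
  comm i l j k h h' := by
    simpa [gen] using RingQuot.mkAlgHom_rel K (QMatRel.comm (p := p) i l j k h h')
  quantum i l j k h h' := by
    simpa [gen] using RingQuot.mkAlgHom_rel K (QMatRel.quantum (p := p) i l j k h h')

lemma adjoin_range_gen (p : K) :
    Algebra.adjoin K (Set.range (gen (n := n) p)) = ⊤ := by
  have hrange : Set.range (gen (n := n) p) =
      RingQuot.mkAlgHom K (QMatRel K n p) '' Set.range (FreeAlgebra.ι K) :=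
    Set.range_comp _ _
  rw [hrange, ← AlgHom.map_adjoin, FreeAlgebra.adjoin_range_ι, Algebra.map_top,
    AlgHom.range_eq_top]
  exact RingQuot.mkAlgHom_surjective K _

variable {A : Type*} [Ring A] [Algebra K A]

/-- The universal property of `O_p(M_n(K))`: the homomorphism sending `X_{ij}` to `f (i, j)`. -/
noncomputable def lift (f : Fin n × Fin n → A)
    (hf : QuantumRelations p (fun a b => f a * f b)) : QMat K n p →ₐ[K] A :=
  RingQuot.liftAlgHom K ⟨FreeAlgebra.lift K f, by
    intro x y h
    induction h with
    | col i l j h => simpa using hf.col i l j h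
    | row i j k h => simpa using hf.row i j k h
    | comm i l j k h h' => simpa using hf.comm i l j k h h'
    | quantum i l j k h h' => simpa using hf.quantum i l j k h h'⟩

@[simp] lemma lift_gen (f : Fin n × Fin n → A)
    (hf : QuantumRelations p (fun a b => f a * f b)) (c : Fin n × Fin n) :
    lift f hf (gen p c) = f c := by
  simp [lift, gen]

lemma algHom_ext {f g : QMat K n p →ₐ[K] A} (h : ∀ c, f (gen p c) = g (gen p c)) : f = g :=
  AlgHom.ext_of_adjoin_eq_top (adjoin_range_gen p) (by rintro _ ⟨c, rfl⟩; exact h c)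

end UniversalProperty

section Reversal

/-- The homomorphism reversing the order of the rows and of the columns. -/
noncomputable def revHom (hpq : p * q = 1) : QMat K n p →ₐ[K] QMat K n q :=
  lift (fun c => gen q (c.1.rev, c.2.rev)) <| by
    simpa only [eq_inv_of_mul_eq_one_left hpq] using
      (quantumRelations_gen q).comp_strictAnti Fin.rev_strictAnti
        (right_ne_zero_of_mul_eq_one hpq)

@[simp] lemma revHom_gen (hpq : p * q = 1) (c : Fin n × Fin n) :
    revHom hpq (gen p c) = gen q (c.1.rev, c.2.rev) :=
  lift_gen _ _ c

/-- The isomorphism `O_p(M_n(K)) ≅ O_{p⁻¹}(M_n(K))` reversing the order of the rows and of the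
columns. -/
noncomputable def revEquiv (hpq : p * q = 1) : QMat K n p ≃ₐ[K] QMat K n q :=
  AlgEquiv.ofAlgHom (revHom hpq) (revHom (mul_comm p q ▸ hpq)) (algHom_ext (by simp))
    (algHom_ext (by simp))

end Reversal

section Truncations

/-- Reduction of `O_q(M_n(K))` modulo the square of its augmentation ideal: `fst` is the constant
term of an element and `snd` its linear part. -/
noncomputable def linearization (q : K) :
    QMat K n q →ₐ[K] TrivSqZeroExt K (Fin n × Fin n → K) :=
  lift (fun c => .inr (Pi.single c 1)) <| by
    simpa only [TrivSqZeroExt.inr_mul_inr] using QuantumRelations.zero q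

@[simp] lemma linearization_gen (q : K) (c : Fin n × Fin n) :
    linearization q (gen q c) = .inr (Pi.single c 1) :=
  lift_gen _ _ c

lemma snd_linearization_algEquiv_gen_ne_zero (Φ : QMat K n p ≃ₐ[K] QMat K n q)
    (c : Fin n × Fin n) : (linearization q (Φ (gen p c))).snd ≠ 0 := by
  let d c := (linearization q (Φ (gen p c))).snd
  have hspan (z : QMat K n p) : (linearization q (Φ z)).snd ∈ Submodule.span K (Set.range d) := by
    simpa [← Set.range_comp, Function.comp_def] using snd_mem_span_of_adjoin_eq_top
      (adjoin_range_gen p) ((linearization q).comp (Φ : QMat K n p →ₐ[K] QMat K n q)) z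
  have htop : ⊤ ≤ Submodule.span K (Set.range d) := by
    rw [← (Pi.basisFun K (Fin n × Fin n)).span_eq, Submodule.span_le]
    rintro _ ⟨c, rfl⟩
    simpa using hspan (Φ.symm (gen q c))
  exact (linearIndependent_of_top_le_span_of_card_eq_finrank htop (by simp)).ne_zero c

variable {m : Matrix (Fin n × Fin n) (Fin n × Fin n) K}

/-- The representation of `O_q(M_n(K))` by left multiplication on its truncation `K × V × K` in
degrees at most two, where the degree two part is collapsed to `K` by the functional
`X a * X b ↦ m a b`. -/
noncomputable def quadraticRep (hm : QuantumRelations q m) :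
    QMat K n q →ₐ[K] Module.End K (K × (Fin n × Fin n → K) × K) :=
  lift (fun c => shift (Matrix.toBilin' m) (Pi.single c 1)) <| by
    simpa [shift_mul_shift] using hm.map (LinearMap.smulRightₗ (LinearMap.fst K K _) ∘ₗ
      LinearMap.inr K K ((Fin n × Fin n → K) × K) ∘ₗ LinearMap.inr K (Fin n × Fin n → K) K)

@[simp] lemma quadraticRep_gen (hm : QuantumRelations q m) (c : Fin n × Fin n) :
    quadraticRep hm (gen q c) = shift (Matrix.toBilin' m) (Pi.single c 1) :=
  lift_gen _ _ c

lemma exists_quadraticRep_apply_eq (hm : QuantumRelations q m) (z : QMat K n q) :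
    ∃ β : K, ∀ s v t, quadraticRep hm z (s, v, t) =
      ((linearization q z).fst * s,
        (linearization q z).fst • v + s • (linearization q z).snd,
        (linearization q z).fst * t + Matrix.toBilin' m (linearization q z).snd v + s * β) := by
  have hz : z ∈ Algebra.adjoin K (Set.range (gen q)) := adjoin_range_gen q ▸ Algebra.mem_top
  induction hz using Algebra.adjoin_induction with
  | mem x hx =>
    obtain ⟨c, rfl⟩ := hx
    exact ⟨0, by simp⟩
  | algebraMap k =>
    exact ⟨0, by simp [TrivSqZeroExt.algebraMap_eq_inl, Module.algebraMap_end_apply]⟩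
  | add x y _ _ hx hy =>
    obtain ⟨β, hx⟩ := hx
    obtain ⟨γ, hy⟩ := hy
    refine ⟨β + γ, fun s v t => ?_⟩
    simp only [map_add, LinearMap.add_apply, hx, hy, TrivSqZeroExt.fst_add,
      TrivSqZeroExt.snd_add, Prod.mk_add_mk, Prod.mk.injEq]
    exact ⟨by ring, by module, by ring⟩
  | mul x y _ _ hx hy =>
    obtain ⟨β, hx⟩ := hx
    obtain ⟨γ, hy⟩ := hy
    refine ⟨(linearization q x).fst * γ +
      Matrix.toBilin' m (linearization q x).snd (linearization q y).snd +
      (linearization q y).fst * β, fun s v t => ?_⟩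
    simp only [map_mul, Module.End.mul_apply, hx, hy, TrivSqZeroExt.fst_mul, op_smul_eq_smul,
      TrivSqZeroExt.snd_mul, Prod.mk.injEq, map_add, map_smul, LinearMap.add_apply,
      LinearMap.smul_apply, smul_eq_mul]
    exact ⟨by ring, by module, by ring⟩

end Truncations

section Rigidity

lemma bilin_linearization_of_mul_eq_smul_mul {m : Matrix (Fin n × Fin n) (Fin n × Fin n) K}
    (hm : QuantumRelations q m) {x y : QMat K n q} (h : x * y = p • (y * x))
    (hx : (linearization q x).fst = 0) (hy : (linearization q y).fst = 0) :
    Matrix.toBilin' m (linearization q x).snd (linearization q y).snd =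
      p * Matrix.toBilin' m (linearization q y).snd (linearization q x).snd := by
  obtain ⟨β, hβ⟩ := exists_quadraticRep_apply_eq hm x
  obtain ⟨γ, hγ⟩ := exists_quadraticRep_apply_eq hm y
  simpa [hβ, hγ, hx, hy] using congrArg (fun z => quadraticRep hm z (1, 0, 0)) h

lemma eq_or_eq_inv_of_mul_eq_smul_mul (hp₀ : p ≠ 0) (hp : p ≠ 1) {x y : QMat K n q}
    (h : x * y = p • (y * x)) (hx : (linearization q x).snd ≠ 0)
    (hy : (linearization q y).snd ≠ 0) : p = q ∨ p = q⁻¹ := by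
  have hxy : linearization q x * linearization q y = 0 :=
    mul_eq_zero_of_mul_eq_smul_mul hp (by simpa using congrArg (linearization q) h)
  have hy₀ : (linearization q y).fst = 0 := fst_eq_zero_of_mul_eq_zero_of_snd_ne_zero hxy hx
  have hx₀ : (linearization q x).fst = 0 :=
    fst_eq_zero_of_mul_eq_zero_of_snd_ne_zero (mul_comm (linearization q x) _ ▸ hxy) hy
  exact eq_or_eq_inv_of_forall_bilin hp₀ hp hx hy fun m hm =>
    bilin_linearization_of_mul_eq_smul_mul hm h hx₀ hy₀

lemma eq_or_eq_inv_of_algEquiv (hn : 2 ≤ n) {p q : Kˣ} (hp : p ≠ 1)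
    (Φ : QMat K n (p : K) ≃ₐ[K] QMat K n (q : K)) : p = q ∨ p = q⁻¹ := by
  let i : Fin n := ⟨0, by lia⟩
  let j : Fin n := ⟨1, by lia⟩
  have hrow : Φ (gen _ (i, j)) * Φ (gen _ (i, i)) =
      (p : K) • (Φ (gen _ (i, i)) * Φ (gen _ (i, j))) := by
    simpa using congrArg Φ ((quantumRelations_gen (p : K)).row i j i (by simp [i, j]))
  have hpq : (p : K) = q ∨ (p : K) = (q : K)⁻¹ :=
    eq_or_eq_inv_of_mul_eq_smul_mul p.ne_zero (by simpa using hp) hrow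
      (snd_linearization_algEquiv_gen_ne_zero Φ _) (snd_linearization_algEquiv_gen_ne_zero Φ _)
  simpa [Units.ext_iff] using hpq

end Rigidity

end QMat

/-- for `n ≥ 2`, `O_p(M_n(K)) ≅ O_q(M_n(K))` iff `p = q` or
`p = q⁻¹`. -/
theorem qMat_iso_iff (K : Type*) [Field K] (n : ℕ) (hn : 2 ≤ n) (p q : Kˣ) :
    Nonempty (QMat K n (p : K) ≃ₐ[K] QMat K n (q : K)) ↔ (p = q ∨ p = q⁻¹) := by
  constructor
  · rintro ⟨Φ⟩
    rcases eq_or_ne p 1 with rfl | hp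
    · rcases eq_or_ne q 1 with rfl | hq
      · exact .inl rfl
      · simpa [eq_comm] using QMat.eq_or_eq_inv_of_algEquiv hn hq Φ.symm
    · exact QMat.eq_or_eq_inv_of_algEquiv hn hp Φ
  · rintro (rfl | rfl)
    · exact ⟨.refl⟩
    · exact ⟨QMat.revEquiv q.inv_mul⟩
end

section
/- Let K be a field and c, d, q₁, q₂ ∈ Kˣ. Then R(q₁⁻¹c⁻¹, q₁d⁻¹, q₁, q₂⁻¹) is isomorphic to R(c, d, q₁, q₂) as K-algebras; an isomorphism is given by x₁ ↦ cd·y₁, x₂ ↦ y₄, x₃ ↦ y₃, x₄ ↦ y₂, where x₁,…,x₄ are the generators of the source and y₁,…,y₄ those of the target. -/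
/-- The defining relations of Jordan's ambiskew polynomial ring `R(a,b,p₁,p₂)`,
with generators `x₁ = ι 0`, `x₂ = ι 1`, `x₃ = ι 2`, `x₄ = ι 3`:
`x₄x₁ = a·x₁x₄`, `x₂x₁ = p₁⁻¹a⁻¹·x₁x₂`, `x₁x₃ = p₁·x₃x₁`, `x₄x₃ = b·x₃x₄`,
`x₂x₃ = p₁b⁻¹·x₃x₂`, `x₂x₄ = p₂·x₄x₂ + (1 - p₂ab)·x₁x₃`. -/
inductive AmbRel (K : Type*) [Field K] (a b p₁ p₂ : K) :
    FreeAlgebra K (Fin 4) → FreeAlgebra K (Fin 4) → Prop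
  | r41 : AmbRel K a b p₁ p₂ (FreeAlgebra.ι K 3 * FreeAlgebra.ι K 0)
      (a • (FreeAlgebra.ι K 0 * FreeAlgebra.ι K 3))
  | r21 : AmbRel K a b p₁ p₂ (FreeAlgebra.ι K 1 * FreeAlgebra.ι K 0)
      ((p₁⁻¹ * a⁻¹) • (FreeAlgebra.ι K 0 * FreeAlgebra.ι K 1))
  | r13 : AmbRel K a b p₁ p₂ (FreeAlgebra.ι K 0 * FreeAlgebra.ι K 2)
      (p₁ • (FreeAlgebra.ι K 2 * FreeAlgebra.ι K 0))
  | r43 : AmbRel K a b p₁ p₂ (FreeAlgebra.ι K 3 * FreeAlgebra.ι K 2)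
      (b • (FreeAlgebra.ι K 2 * FreeAlgebra.ι K 3))
  | r23 : AmbRel K a b p₁ p₂ (FreeAlgebra.ι K 1 * FreeAlgebra.ι K 2)
      ((p₁ * b⁻¹) • (FreeAlgebra.ι K 2 * FreeAlgebra.ι K 1))
  | r24 : AmbRel K a b p₁ p₂ (FreeAlgebra.ι K 1 * FreeAlgebra.ι K 3)
      (p₂ • (FreeAlgebra.ι K 3 * FreeAlgebra.ι K 1) +
        (1 - p₂ * a * b) • (FreeAlgebra.ι K 0 * FreeAlgebra.ι K 2))

/-- Jordan's ambiskew polynomial ring `R(a,b,p₁,p₂)`. -/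
abbrev Ambiskew (K : Type*) [Field K] (a b p₁ p₂ : K) := RingQuot (AmbRel K a b p₁ p₂)

/-- The images of the four free generators in `R(a,b,p₁,p₂)`;
`agen K a b p₁ p₂ i` is the generator `x_{i+1}`. -/
noncomputable def agen (K : Type*) [Field K] (a b p₁ p₂ : K) (i : Fin 4) :
    Ambiskew K a b p₁ p₂ :=
  RingQuot.mkAlgHom K (AmbRel K a b p₁ p₂) (FreeAlgebra.ι K i)

/-!
Interchanging `x₂` and `x₄` in the relations of `R(a,b,p₁,p₂)` inverts `p₂` and turns `a`, `b` into
`p₁⁻¹a⁻¹`, `p₁b⁻¹`. Only the last relation is not visibly preserved: solved for `x₄x₂`, its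
inhomogeneous term is `(ab - p₂⁻¹)x₁x₃ = (1 - p₂⁻¹(ab)⁻¹)(ab·x₁)x₃`, which is why `x₁` must be
rescaled by `ab`. The change of parameters is an involution that inverts `ab`, so performing the
same substitution twice gives back the original generators.
-/

namespace Ambiskew

variable {K : Type*} [Field K] {a b p₁ p₂ a' b' p₂' : K}

section UniversalProperty

variable {A : Type*} [Semiring A] [Algebra K A]

/-- The tuples `z` in a `K`-algebra satisfying the defining relations of `R(a,b,p₁,p₂)`, with
`z i` in place of `x_{i+1}`: these are the data for a homomorphism out of `R(a,b,p₁,p₂)`. -/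
structure Relations (a b p₁ p₂ : K) (z : Fin 4 → A) : Prop where
  r41 : z 3 * z 0 = a • (z 0 * z 3)
  r21 : z 1 * z 0 = (p₁⁻¹ * a⁻¹) • (z 0 * z 1)
  r13 : z 0 * z 2 = p₁ • (z 2 * z 0)
  r43 : z 3 * z 2 = b • (z 2 * z 3)
  r23 : z 1 * z 2 = (p₁ * b⁻¹) • (z 2 * z 1)
  r24 : z 1 * z 3 = p₂ • (z 3 * z 1) + (1 - p₂ * a * b) • (z 0 * z 2)

theorem relations_agen : Relations a b p₁ p₂ (agen K a b p₁ p₂) := by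
  constructor <;> simp only [agen, ← map_mul, ← map_smul, ← map_add] <;>
    exact RingQuot.mkAlgHom_rel K (by constructor)

theorem Relations.lift_eq_lift {z : Fin 4 → A} (hz : Relations a b p₁ p₂ z)
    {x y : FreeAlgebra K (Fin 4)} (hxy : AmbRel K a b p₁ p₂ x y) :
    FreeAlgebra.lift K z x = FreeAlgebra.lift K z y := by
  cases hxy <;> simp only [map_mul, map_smul, map_add, FreeAlgebra.lift_ι_apply]
  exacts [hz.r41, hz.r21, hz.r13, hz.r43, hz.r23, hz.r24]

/-- The homomorphism out of `R(a,b,p₁,p₂)` sending the generators to a given tuple that satisfies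
the defining relations. -/
noncomputable def lift (z : Fin 4 → A) (hz : Relations a b p₁ p₂ z) :
    Ambiskew K a b p₁ p₂ →ₐ[K] A :=
  RingQuot.liftAlgHom K ⟨FreeAlgebra.lift K z, fun _ _ => hz.lift_eq_lift⟩

theorem lift_comp_agen (z : Fin 4 → A) (hz : Relations a b p₁ p₂ z) :
    lift z hz ∘ agen K a b p₁ p₂ = z := by
  funext i
  simp only [lift, agen, Function.comp_apply, RingQuot.liftAlgHom_mkAlgHom_apply,
    FreeAlgebra.lift_ι_apply]

theorem algHom_ext {f g : Ambiskew K a b p₁ p₂ →ₐ[K] A}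
    (h : f ∘ agen K a b p₁ p₂ = g ∘ agen K a b p₁ p₂) : f = g :=
  RingQuot.ringQuot_ext' K f g (FreeAlgebra.hom_ext h)

end UniversalProperty

section Swap

/-- The substitution `(x₁, x₂, x₃, x₄) ↦ (s·x₁, x₄, x₃, x₂)` underlying the isomorphism,
performed on the entries of a tuple. -/
def swap {R M : Type*} [SMul R M] (s : R) (z : Fin 4 → M) : Fin 4 → M :=
  ![s • z 0, z 3, z 2, z 1]

theorem swap_swap {R M : Type*} [Monoid R] [MulAction R M] {s t : R} (hst : s * t = 1)
    (z : Fin 4 → M) : swap s (swap t z) = z := by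
  funext i
  fin_cases i
  · change s • t • z 0 = z 0
    rw [smul_smul, hst, one_smul]
  all_goals rfl

theorem map_comp_swap {R M N F : Type*} [SMul R M] [SMul R N] [FunLike F M N]
    [MulActionHomClass F R M N] (f : F) (s : R) (z : Fin 4 → M) :
    f ∘ swap s z = swap s (f ∘ z) := by
  funext i
  fin_cases i
  · exact map_smul f s (z 0)
  all_goals rfl

/-- The change of parameters corresponding to `swap`:
`(a', b', p₁, p₂') = (p₁⁻¹a⁻¹, p₁b⁻¹, p₁, p₂⁻¹)`. In this division-free form it is symmetric and
forces all the parameters to be nonzero. -/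
structure SwapParams (p₁ a b p₂ a' b' p₂' : K) : Prop where
  mul_mul_eq_one : p₁ * a * a' = 1
  mul_eq : b * b' = p₁
  mul_eq_one : p₂ * p₂' = 1

namespace SwapParams

theorem symm (h : SwapParams p₁ a b p₂ a' b' p₂') : SwapParams p₁ a' b' p₂' a b p₂ where
  mul_mul_eq_one := by rw [mul_right_comm, h.mul_mul_eq_one]
  mul_eq := by rw [mul_comm, h.mul_eq]
  mul_eq_one := by rw [mul_comm, h.mul_eq_one]

theorem inv_mul_inv_eq (h : SwapParams p₁ a b p₂ a' b' p₂') : p₁⁻¹ * a⁻¹ = a' := by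
  rw [← mul_inv]
  exact inv_eq_of_mul_eq_one_right h.mul_mul_eq_one

theorem mul_inv_eq (h : SwapParams p₁ a b p₂ a' b' p₂') : p₁ * b⁻¹ = b' := by
  have hp₁ : p₁ ≠ 0 := left_ne_zero_of_mul (left_ne_zero_of_mul_eq_one h.mul_mul_eq_one)
  have hb : b ≠ 0 := left_ne_zero_of_mul (h.mul_eq ▸ hp₁)
  rw [← h.mul_eq, mul_comm b, mul_inv_cancel_right₀ hb]

theorem mul_mul_mul_eq_one (h : SwapParams p₁ a b p₂ a' b' p₂') : a * b * (a' * b') = 1 := by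
  linear_combination h.mul_mul_eq_one + a * a' * h.mul_eq

end SwapParams

theorem Relations.swap {A : Type*} [Semiring A] [Algebra K A] {z : Fin 4 → A}
    (hz : Relations a b p₁ p₂ z) (h : SwapParams p₁ a b p₂ a' b' p₂') :
    Relations a' b' p₁ p₂' (swap (a * b) z) := by
  constructor <;>
    simp only [Ambiskew.swap, Matrix.cons_val, smul_mul_assoc, mul_smul_comm]
  · rw [hz.r21, h.inv_mul_inv_eq, smul_comm]
  · rw [hz.r41, h.symm.inv_mul_inv_eq, smul_comm]
  · rw [hz.r13, smul_comm]
  · rw [hz.r23, h.mul_inv_eq]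
  · rw [hz.r43, h.symm.mul_inv_eq]
  · rw [hz.r24]
    match_scalars
    · linear_combination -h.mul_eq_one
    · linear_combination p₂' * h.mul_mul_mul_eq_one + a * b * h.mul_eq_one

/-- The homomorphism `R(a',b',p₁,p₂') → R(a,b,p₁,p₂)` given by
`x₁ ↦ ab·y₁`, `x₂ ↦ y₄`, `x₃ ↦ y₃`, `x₄ ↦ y₂`. -/
noncomputable def swapHom (h : SwapParams p₁ a b p₂ a' b' p₂') :
    Ambiskew K a' b' p₁ p₂' →ₐ[K] Ambiskew K a b p₁ p₂ :=
  lift _ (relations_agen.swap h)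

theorem swapHom_comp_agen (h : SwapParams p₁ a b p₂ a' b' p₂') :
    swapHom h ∘ agen K a' b' p₁ p₂' = swap (a * b) (agen K a b p₁ p₂) :=
  lift_comp_agen _ _

theorem swapHom_comp_swapHom_symm (h : SwapParams p₁ a b p₂ a' b' p₂') :
    (swapHom h).comp (swapHom h.symm) = AlgHom.id K (Ambiskew K a b p₁ p₂) := by
  apply algHom_ext
  calc ((swapHom h).comp (swapHom h.symm)) ∘ agen K a b p₁ p₂
    _ = swapHom h ∘ swap (a' * b') (agen K a' b' p₁ p₂') := by
      rw [AlgHom.coe_comp, Function.comp_assoc, swapHom_comp_agen]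
    _ = swap (a' * b') (swap (a * b) (agen K a b p₁ p₂)) := by
      rw [map_comp_swap, swapHom_comp_agen]
    _ = agen K a b p₁ p₂ := swap_swap h.symm.mul_mul_mul_eq_one _

/-- `swapHom` as an isomorphism; its inverse is `swapHom` for the exchanged parameters. -/
noncomputable def swapEquiv (h : SwapParams p₁ a b p₂ a' b' p₂') :
    Ambiskew K a' b' p₁ p₂' ≃ₐ[K] Ambiskew K a b p₁ p₂ :=
  AlgEquiv.ofAlgHom (swapHom h) (swapHom h.symm) (swapHom_comp_swapHom_symm h)
    (swapHom_comp_swapHom_symm h.symm)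

theorem swapEquiv_agen (h : SwapParams p₁ a b p₂ a' b' p₂') (i : Fin 4) :
    swapEquiv h (agen K a' b' p₁ p₂' i) = swap (a * b) (agen K a b p₁ p₂) i :=
  congrFun (swapHom_comp_agen h) i

end Swap

end Ambiskew

/-- `R(q₁⁻¹c⁻¹, q₁d⁻¹, q₁, q₂⁻¹) ≅ R(c,d,q₁,q₂)` via
`x₁ ↦ cd·y₁`, `x₂ ↦ y₄`, `x₃ ↦ y₃`, `x₄ ↦ y₂`. -/
theorem ambiskew_iso_two (K : Type*) [Field K] (c d q₁ q₂ : Kˣ) :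
    ∃ Φ : Ambiskew K ((q₁ : K)⁻¹ * (c : K)⁻¹) ((q₁ : K) * (d : K)⁻¹) (q₁ : K) ((q₂ : K)⁻¹)
        ≃ₐ[K] Ambiskew K (c : K) (d : K) (q₁ : K) (q₂ : K),
      Φ (agen K ((q₁ : K)⁻¹ * (c : K)⁻¹) ((q₁ : K) * (d : K)⁻¹) (q₁ : K) ((q₂ : K)⁻¹) 0) =
        ((c : K) * (d : K)) • agen K (c : K) (d : K) (q₁ : K) (q₂ : K) 0 ∧
      Φ (agen K ((q₁ : K)⁻¹ * (c : K)⁻¹) ((q₁ : K) * (d : K)⁻¹) (q₁ : K) ((q₂ : K)⁻¹) 1) =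
        agen K (c : K) (d : K) (q₁ : K) (q₂ : K) 3 ∧
      Φ (agen K ((q₁ : K)⁻¹ * (c : K)⁻¹) ((q₁ : K) * (d : K)⁻¹) (q₁ : K) ((q₂ : K)⁻¹) 2) =
        agen K (c : K) (d : K) (q₁ : K) (q₂ : K) 2 ∧
      Φ (agen K ((q₁ : K)⁻¹ * (c : K)⁻¹) ((q₁ : K) * (d : K)⁻¹) (q₁ : K) ((q₂ : K)⁻¹) 3) =
        agen K (c : K) (d : K) (q₁ : K) (q₂ : K) 1 := by
  have h : Ambiskew.SwapParams (q₁ : K) c d q₂ ((q₁ : K)⁻¹ * (c : K)⁻¹) (q₁ * (d : K)⁻¹)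
      (q₂ : K)⁻¹ :=
    { mul_mul_eq_one := by rw [← mul_inv, mul_inv_cancel₀ (mul_ne_zero q₁.ne_zero c.ne_zero)]
      mul_eq := by rw [mul_left_comm, mul_inv_cancel₀ d.ne_zero, mul_one]
      mul_eq_one := mul_inv_cancel₀ q₂.ne_zero }
  exact ⟨Ambiskew.swapEquiv h, Ambiskew.swapEquiv_agen h 0, Ambiskew.swapEquiv_agen h 1,
    Ambiskew.swapEquiv_agen h 2, Ambiskew.swapEquiv_agen h 3⟩
end

section
/- Let K be a field and a, b, p, c, d, q ∈ Kˣ. Assume a ≠ 1, b ≠ 1, ab ≠ 1, p² ≠ 1, pa ≠ 1, pb⁻¹ ≠ 1, pa² ≠ 1, p⁻¹b² ≠ 1, and likewise c ≠ 1, d ≠ 1, cd ≠ 1, q² ≠ 1, qc ≠ 1, qd⁻¹ ≠ 1, qc² ≠ 1, q⁻¹d² ≠ 1. If R(a,b,p,1) and R(c,d,q,1) are isomorphic as K-algebras, then (a,b,p) equals one of the following triples: (c,d,q), (q⁻¹c⁻¹, qd⁻¹, q), (d, c, q⁻¹), or (qd⁻¹, q⁻¹c⁻¹, q⁻¹). 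-/
/-!
A surjection `φ : R(a,b,p,p₂) → R(c,d,q,1)` is controlled by its linear part `L`, an invertible
`4 × 4` matrix. The relations `x₄x₁ = a·x₁x₄` and `x₂x₃ = pb⁻¹·x₃x₂`, whose factors differ from `1`,
force the constant terms of the `φ(xᵢ)` to vanish. Hence `L` carries the quadratic relations of the
source into those of the target; dually, `β ↦ LβLᵀ` carries the bilinear forms annihilating the
relations of the target to forms annihilating those of the source.

Symmetric annihilators see the largest commutative quotients. In that of the source, `x₁` and `x₃`
kill all other generators, whereas in that of the target the products `x₁²`, `x₂²`, `x₃²`, `x₄²`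
and `x₂x₄` are independent in degree two. So `L` maps `x₁` and `x₃` to multiples of `x₁` and `x₃`,
in some order, and `x₄` to a combination of `x₂` and `x₄`. The two orders, together with the choice
of a nonzero coefficient in this combination, give the four cases; in each of them three skew
annihilators of the target read off `a`, `b` and `p`. If `p₂ ≠ 1`, then `x₄` also kills all other
generators in the commutative quotient of the source, which contradicts the invertibility of `L`.
-/

section TrivSqZeroExt

variable {R M : Type*} [AddCommGroup M]

theorem snd_map_mem_span [CommRing R] [Module R M] [Module Rᵐᵒᵖ M] [IsCentralScalar R M]
    {ι A : Type*} [Ring A] [Algebra R A] {g : ι → A} (hg : Algebra.adjoin R (Set.range g) = ⊤)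
    (f : A →ₐ[R] TrivSqZeroExt R M) (z : A) :
    (f z).snd ∈ Submodule.span R (Set.range fun i => (f (g i)).snd) := by
  have hz : z ∈ Algebra.adjoin R (Set.range g) := hg ▸ Algebra.mem_top
  induction hz using Algebra.adjoin_induction with
  | mem x hx =>
    obtain ⟨i, rfl⟩ := hx
    exact Submodule.subset_span ⟨i, rfl⟩
  | algebraMap r =>
    rw [AlgHom.commutes]
    exact Submodule.zero_mem _
  | add x y _ _ hx hy => simpa using Submodule.add_mem _ hx hy
  | mul x y _ _ hx hy =>
    rw [map_mul, TrivSqZeroExt.snd_mul, op_smul_eq_smul]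
    exact Submodule.add_mem _ (Submodule.smul_mem _ _ hy) (Submodule.smul_mem _ _ hx)

theorem eq_zero_of_eq_smul_self [Field R] [Module R M] {r : R} {x : M} (hr : r ≠ 1)
    (h : x = r • x) : x = 0 := by
  have : (r - 1) • x = 0 := by rw [sub_smul, one_smul, ← h, sub_self]
  exact (smul_eq_zero.1 this).resolve_left (sub_ne_zero.2 hr)

theorem fst_eq_zero_of_mul_eq_smul_mul [Field R] [Module R M] [Module Rᵐᵒᵖ M]
    [IsCentralScalar R M] {x y : TrivSqZeroExt R M} {r : R} (hr : r ≠ 1)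
    (hxy : LinearIndependent R ![x.snd, y.snd]) (h : x * y = r • (y * x)) :
    x.fst = 0 ∧ y.fst = 0 := by
  have hmul : x * y = 0 := eq_zero_of_eq_smul_self hr (by rwa [mul_comm y x] at h)
  have hsnd := congrArg TrivSqZeroExt.snd hmul
  rw [TrivSqZeroExt.snd_mul, op_smul_eq_smul, TrivSqZeroExt.snd_zero, add_comm] at hsnd
  exact (LinearIndependent.pair_iff.1 hxy _ _ hsnd).symm

end TrivSqZeroExt

section QuadExt

variable {R M N : Type*} [CommRing R] [AddCommGroup M] [Module R M] [AddCommGroup N] [Module R N]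

/-- The graded algebra `R ⊕ M ⊕ N` in which the product `M × M → N` is the bilinear map `β` and all
products of degree at least three vanish. A bilinear form that annihilates the relations of a
quadratic algebra gives an algebra homomorphism to such a `QuadExt`. -/
@[ext]
structure QuadExt (β : M →ₗ[R] M →ₗ[R] N) where
  const : R
  lin : M
  quad : N

namespace QuadExt

variable (β : M →ₗ[R] M →ₗ[R] N)

/-- The underlying triple, along which the module structure is transported. -/
@[simps]
def equivProd : QuadExt β ≃ R × M × N where
  toFun x := (x.const, x.lin, x.quad)
  invFun x := ⟨x.1, x.2.1, x.2.2⟩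

instance : AddCommGroup (QuadExt β) := (equivProd β).addCommGroup

instance : Module R (QuadExt β) := (equivProd β).module R

instance : One (QuadExt β) := ⟨⟨1, 0, 0⟩⟩

instance : Mul (QuadExt β) :=
  ⟨fun x y => ⟨x.const * y.const, x.const • y.lin + y.const • x.lin,
    x.const • y.quad + y.const • x.quad + β x.lin y.lin⟩⟩

variable {β}

@[simp] theorem const_zero : (0 : QuadExt β).const = 0 := rfl
@[simp] theorem lin_zero : (0 : QuadExt β).lin = 0 := rfl
@[simp] theorem quad_zero : (0 : QuadExt β).quad = 0 := rfl
@[simp] theorem const_one : (1 : QuadExt β).const = 1 := rfl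
@[simp] theorem lin_one : (1 : QuadExt β).lin = 0 := rfl
@[simp] theorem quad_one : (1 : QuadExt β).quad = 0 := rfl

variable (r : R) (x y : QuadExt β)

@[simp] theorem const_add : (x + y).const = x.const + y.const := rfl
@[simp] theorem lin_add : (x + y).lin = x.lin + y.lin := rfl
@[simp] theorem quad_add : (x + y).quad = x.quad + y.quad := rfl
@[simp] theorem const_smul : (r • x).const = r * x.const := rfl
@[simp] theorem lin_smul : (r • x).lin = r • x.lin := rfl
@[simp] theorem quad_smul : (r • x).quad = r • x.quad := rfl
@[simp] theorem const_mul : (x * y).const = x.const * y.const := rfl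
@[simp] theorem lin_mul : (x * y).lin = x.const • y.lin + y.const • x.lin := rfl
@[simp] theorem quad_mul :
    (x * y).quad = x.const • y.quad + y.const • x.quad + β x.lin y.lin := rfl

instance : Ring (QuadExt β) where
  __ := (inferInstance : AddCommGroup (QuadExt β))
  zero_mul _ := by ext <;> simp
  mul_zero _ := by ext <;> simp
  one_mul _ := by ext <;> simp
  mul_one _ := by ext <;> simp
  left_distrib _ _ _ := QuadExt.ext (mul_add _ _ _)
    (by simp only [lin_add, lin_mul, const_add]; module)
    (by simp only [quad_add, quad_mul, const_add, lin_add, map_add]; module)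
  right_distrib _ _ _ := QuadExt.ext (add_mul _ _ _)
    (by simp only [lin_add, lin_mul, const_add]; module)
    (by simp only [quad_add, quad_mul, const_add, lin_add, map_add, LinearMap.add_apply]; module)
  mul_assoc _ _ _ := QuadExt.ext (mul_assoc _ _ _)
    (by simp only [lin_mul, const_mul]; module)
    (by
      simp only [quad_mul, const_mul, lin_mul, map_add, map_smul, LinearMap.add_apply,
        LinearMap.smul_apply]
      module)

instance : Algebra R (QuadExt β) :=
  Algebra.ofModule
    (fun _ _ _ => QuadExt.ext (mul_assoc _ _ _)
      (by simp only [lin_mul, lin_smul, const_smul]; module)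
      (by
        simp only [quad_mul, quad_smul, const_smul, lin_smul, map_smul, LinearMap.smul_apply]
        module))
    (fun _ _ _ => QuadExt.ext (mul_left_comm _ _ _)
      (by simp only [lin_mul, lin_smul, const_smul]; module)
      (by simp only [quad_mul, quad_smul, const_smul, lin_smul, map_smul]; module))

variable (β) in
/-- The quotient of `R ⊕ M ⊕ N` by its degree-two part `N`. -/
def toTrivSqZeroExt [Module Rᵐᵒᵖ M] [IsCentralScalar R M] : QuadExt β →ₐ[R] TrivSqZeroExt R M :=
  AlgHom.ofLinearMap
    { toFun := fun x => TrivSqZeroExt.inl x.const + TrivSqZeroExt.inr x.lin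
      map_add' := fun _ _ => by ext <;> simp
      map_smul' := fun _ _ => by ext <;> simp }
    (by ext <;> simp) fun _ _ => by ext <;> simp

@[simp]
theorem fst_toTrivSqZeroExt [Module Rᵐᵒᵖ M] [IsCentralScalar R M] (x : QuadExt β) :
    (toTrivSqZeroExt β x).fst = x.const := by
  simp [toTrivSqZeroExt]

@[simp]
theorem snd_toTrivSqZeroExt [Module Rᵐᵒᵖ M] [IsCentralScalar R M] (x : QuadExt β) :
    (toTrivSqZeroExt β x).snd = x.lin := by
  simp [toTrivSqZeroExt]

variable (β) in
/-- The projection to the degree-two part. -/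
@[simps]
def quadHom : QuadExt β →ₗ[R] N where
  toFun := quad
  map_add' := quad_add
  map_smul' := quad_smul

variable (β) in
/-- The inclusion of the degree-two part. -/
@[simps]
def inQuad : N →ₗ[R] QuadExt β where
  toFun n := ⟨0, 0, n⟩
  map_add' _ _ := by ext <;> simp
  map_smul' _ _ := by ext <;> simp

end QuadExt

end QuadExt

section Relations

variable {K M N : Type*} [Field K] [AddCommGroup M] [Module K M] [AddCommGroup N] [Module K N]
  {a b p₁ p₂ : K}

/-- The table `μ` of values satisfies the defining relations of `R(a,b,p₁,p₂)`, read as linear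
conditions with `μ i j` in place of the product `xᵢ₊₁xⱼ₊₁`. For `μ i j = gᵢ * gⱼ` in an algebra this
says that the `gᵢ` satisfy the relations; for a scalar matrix `μ` it says that the bilinear form
with matrix `μ` annihilates the relations. -/
structure IsAmbiskew (a b p₁ p₂ : K) (μ : Matrix (Fin 4) (Fin 4) M) : Prop where
  r41 : μ 3 0 = a • μ 0 3
  r21 : μ 1 0 = (p₁⁻¹ * a⁻¹) • μ 0 1
  r13 : μ 0 2 = p₁ • μ 2 0
  r43 : μ 3 2 = b • μ 2 3
  r23 : μ 1 2 = (p₁ * b⁻¹) • μ 2 1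
  r24 : μ 1 3 = p₂ • μ 3 1 + (1 - p₂ * a * b) • μ 0 2

theorem IsAmbiskew.map {μ : Matrix (Fin 4) (Fin 4) M} (h : IsAmbiskew a b p₁ p₂ μ) (f : M →ₗ[K] N) :
    IsAmbiskew a b p₁ p₂ (μ.map f) where
  r41 := by simp [h.r41]
  r21 := by simp [h.r21]
  r13 := by simp [h.r13]
  r43 := by simp [h.r43]
  r23 := by simp [h.r23]
  r24 := by simp [h.r24]

variable {S : Type*} [Ring S] [Algebra K S]

open Matrix

theorem isAmbiskew_agen :
    IsAmbiskew a b p₁ p₂ (vecMulVec (agen K a b p₁ p₂) (agen K a b p₁ p₂)) := by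
  have rel {x y} (h : AmbRel K a b p₁ p₂ x y) :
      RingQuot.mkAlgHom K (AmbRel K a b p₁ p₂) x = RingQuot.mkAlgHom K (AmbRel K a b p₁ p₂) y :=
    RingQuot.mkAlgHom_rel K h
  constructor
  · simpa [vecMulVec_apply, agen] using rel .r41
  · simpa [vecMulVec_apply, agen] using rel .r21
  · simpa [vecMulVec_apply, agen] using rel .r13
  · simpa [vecMulVec_apply, agen] using rel .r43
  · simpa [vecMulVec_apply, agen] using rel .r23
  · simpa [vecMulVec_apply, agen] using rel .r24

theorem isAmbiskew_map_agen (f : Ambiskew K a b p₁ p₂ →ₐ[K] S) :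
    IsAmbiskew a b p₁ p₂ (vecMulVec (f ∘ agen K a b p₁ p₂) (f ∘ agen K a b p₁ p₂)) := by
  convert isAmbiskew_agen.map f.toLinearMap
  ext
  simp [vecMulVec_apply]

theorem exists_algHom_agen {g : Fin 4 → S} (h : IsAmbiskew a b p₁ p₂ (vecMulVec g g)) :
    ∃ f : Ambiskew K a b p₁ p₂ →ₐ[K] S, ∀ i, f (agen K a b p₁ p₂ i) = g i := by
  have hrel : ∀ ⦃x y⦄, AmbRel K a b p₁ p₂ x y →
      FreeAlgebra.lift K g x = FreeAlgebra.lift K g y := by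
    rintro _ _ (_ | _ | _ | _ | _ | _)
    · simpa [vecMulVec_apply] using h.r41
    · simpa [vecMulVec_apply] using h.r21
    · simpa [vecMulVec_apply] using h.r13
    · simpa [vecMulVec_apply] using h.r43
    · simpa [vecMulVec_apply] using h.r23
    · simpa [vecMulVec_apply] using h.r24
  exact ⟨RingQuot.liftAlgHom K ⟨FreeAlgebra.lift K g, hrel⟩, fun i => by simp [agen]⟩

variable (a b p₁ p₂) in
theorem adjoin_range_agen : Algebra.adjoin K (Set.range (agen K a b p₁ p₂)) = ⊤ := by
  have : agen K a b p₁ p₂ = RingQuot.mkAlgHom K (AmbRel K a b p₁ p₂) ∘ FreeAlgebra.ι K := rfl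
  rw [this, Set.range_comp, ← AlgHom.map_adjoin, FreeAlgebra.adjoin_range_ι, Algebra.map_top,
    AlgHom.range_eq_top]
  exact RingQuot.mkAlgHom_surjective K _

variable (a b p₁ p₂) in
theorem exists_truncation : ∃ f : Ambiskew K a b p₁ p₂ →ₐ[K] TrivSqZeroExt K (Fin 4 → K),
    ∀ i, f (agen K a b p₁ p₂ i) = TrivSqZeroExt.inr (Pi.single i 1) :=
  exists_algHom_agen (by constructor <;> simp [vecMulVec_apply])

variable (a b p₁ p₂) in
/-- The quotient of `R(a,b,p₁,p₂)` by the square of the ideal generated by the `xᵢ`: `fst` reads off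
the constant term and `snd` the linear part. -/
noncomputable def truncation : Ambiskew K a b p₁ p₂ →ₐ[K] TrivSqZeroExt K (Fin 4 → K) :=
  (exists_truncation a b p₁ p₂).choose

@[simp]
theorem truncation_agen (i : Fin 4) :
    truncation a b p₁ p₂ (agen K a b p₁ p₂ i) = TrivSqZeroExt.inr (Pi.single i 1) :=
  (exists_truncation a b p₁ p₂).choose_spec i

theorem exists_snd_truncation_eq (v : Fin 4 → K) : ∃ z, (truncation a b p₁ p₂ z).snd = v := by
  refine ⟨∑ i, v i • agen K a b p₁ p₂ i, ?_⟩
  ext j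
  simp [TrivSqZeroExt.snd_sum, Pi.single_apply]

variable {c d q₁ q₂ : K} (φ : Ambiskew K a b p₁ p₂ →ₐ[K] Ambiskew K c d q₁ q₂)

/-- The matrix of the linear part of an algebra homomorphism: row `i` holds the coefficients of the
linear part of `φ(xᵢ₊₁)`. -/
noncomputable def linearPart : Matrix (Fin 4) (Fin 4) K :=
  .of fun i => (truncation c d q₁ q₂ (φ (agen K a b p₁ p₂ i))).snd

theorem linearPart_row (i : Fin 4) :
    linearPart φ i = (truncation c d q₁ q₂ (φ (agen K a b p₁ p₂ i))).snd :=
  rfl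

variable {φ}

theorem linearIndependent_linearPart_row (hφ : Function.Surjective φ) :
    LinearIndependent K (linearPart φ).row := by
  refine linearIndependent_of_top_le_span_of_card_eq_finrank (fun v _ => ?_) (by simp)
  obtain ⟨z, hz⟩ := exists_snd_truncation_eq (a := c) (b := d) (p₁ := q₁) (p₂ := q₂) v
  obtain ⟨y, rfl⟩ := hφ z
  rw [← hz]
  exact snd_map_mem_span (adjoin_range_agen a b p₁ p₂) ((truncation c d q₁ q₂).comp φ) y

theorem fst_truncation_map_agen (ha : a ≠ 1) (hpb : p₁ * b⁻¹ ≠ 1)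
    (hφ : LinearIndependent K (linearPart φ).row) (i : Fin 4) :
    (truncation c d q₁ q₂ (φ (agen K a b p₁ p₂ i))).fst = 0 := by
  have hrel := isAmbiskew_map_agen ((truncation c d q₁ q₂).comp φ)
  have hpair (i j : Fin 4) (hij : i ≠ j) :
      LinearIndependent K ![linearPart φ i, linearPart φ j] := by
    convert hφ.comp ![i, j] (by simpa [Fin.forall_fin_two, Function.Injective, eq_comm] using hij)
    ext k
    fin_cases k <;> rfl
  obtain ⟨h3, h0⟩ := fst_eq_zero_of_mul_eq_smul_mul ha (hpair 3 0 (by decide)) hrel.r41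
  obtain ⟨h1, h2⟩ := fst_eq_zero_of_mul_eq_smul_mul hpb (hpair 1 2 (by decide)) hrel.r23
  fin_cases i <;> assumption

theorem IsAmbiskew.linearPart_mul_mul_transpose {β : Matrix (Fin 4) (Fin 4) K}
    (hβ : IsAmbiskew c d q₁ q₂ β)
    (hφ : ∀ i, (truncation c d q₁ q₂ (φ (agen K a b p₁ p₂ i))).fst = 0) :
    IsAmbiskew a b p₁ p₂ (linearPart φ * β * (linearPart φ)ᵀ) := by
  let B := Matrix.toBilin' β
  have hgen : IsAmbiskew c d q₁ q₂ (vecMulVec (fun i => (⟨0, Pi.single i 1, 0⟩ : QuadExt B))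
      fun j => ⟨0, Pi.single j 1, 0⟩) := by
    convert hβ.map (QuadExt.inQuad B)
    ext i j <;> simp [vecMulVec_apply, B]
  obtain ⟨ρ, hρ⟩ := exists_algHom_agen hgen
  have htrunc : (QuadExt.toTrivSqZeroExt B).comp ρ = truncation c d q₁ q₂ := by
    refine AlgHom.ext_of_adjoin_eq_top (adjoin_range_agen c d q₁ q₂) ?_
    rintro _ ⟨i, rfl⟩
    ext <;> simp [hρ]
  have hconst i : (ρ (φ (agen K a b p₁ p₂ i))).const = 0 := by
    rw [← hφ i, ← htrunc]
    simp
  have hlin i : (ρ (φ (agen K a b p₁ p₂ i))).lin = linearPart φ i := by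
    rw [linearPart_row, ← htrunc]
    simp
  convert (isAmbiskew_map_agen (ρ.comp φ)).map (QuadExt.quadHom B)
  ext i j
  simp [vecMulVec_apply, hconst, hlin, B, Matrix.toBilin'_apply', Matrix.mul_mul_apply]

end Relations

section LinearAlgebra

open Matrix

variable {K n : Type*} [Field K] [Fintype n]

theorem isSymm_mul_mul_transpose {m : Type*} (L : Matrix m n K) {β : Matrix n n K}
    (hβ : β.IsSymm) : (L * β * Lᵀ).IsSymm := by
  rw [IsSymm, transpose_mul, transpose_mul, transpose_transpose, hβ.eq, Matrix.mul_assoc]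

variable [DecidableEq n]

theorem mul_single_mul_transpose_apply (L : Matrix n n K) (i j k l : n) (e : K) :
    (L * single i j e * Lᵀ) k l = L k i * e * L l j := by
  rw [mul_mul_apply, single_mulVec, ← Pi.single, dotProduct_single, transpose_transpose, mul_assoc]

/-- The matrix of the bilinear form with value `1` at `(i, j)`, `r` at `(j, i)` and `0` elsewhere;
for `i ≠ j` it annihilates `xⱼxᵢ - r·xᵢxⱼ`. -/
def skewForm (i j : n) (r : K) : Matrix n n K :=
  single i j 1 + single j i r

theorem mul_skewForm_mul_transpose_apply (L : Matrix n n K) (i j k l : n) (r : K) :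
    (L * skewForm i j r * Lᵀ) k l = L k i * L l j + r * (L k j * L l i) := by
  simp only [skewForm, mul_add, add_mul, Matrix.add_apply, mul_single_mul_transpose_apply]
  ring

theorem eq_of_mul_skewForm_mul_transpose_apply {L : Matrix n n K} {i j k l : n} {r s : K}
    (hkj : L k j = 0) (hki : L k i ≠ 0) (hlj : L l j ≠ 0)
    (h : (L * skewForm i j r * Lᵀ) l k = s * (L * skewForm i j r * Lᵀ) k l) : s = r := by
  simp only [mul_skewForm_mul_transpose_apply, hkj, mul_zero, zero_mul, zero_add, add_zero] at h
  rw [mul_comm (L l j)] at h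
  exact (mul_right_cancel₀ (mul_ne_zero hki hlj) h).symm

theorem apply_eq_zero_of_polar {L : Matrix n n K} (hL : IsUnit L) {r k l : n} (hkl : k ≠ l)
    (hdiag : ∀ i ≠ r, L r k * L i k = 0)
    (hpolar : ∀ i ≠ r, L r k * L i l + L r l * L i k = 0) : L r k = 0 := by
  by_contra hrk
  have hk (i) (hi : i ≠ r) : L i k = 0 := (mul_eq_zero.1 (hdiag i hi)).resolve_left hrk
  have hl (i) (hi : i ≠ r) : L i l = 0 := by simpa [hk i hi, hrk] using hpolar i hi
  -- The columns `k` and `l` of `L` are both supported on row `r`, hence linearly dependent.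
  have hker : L *ᵥ (Pi.single k (L r l) - Pi.single l (L r k)) = 0 := by
    ext i
    obtain rfl | hi := eq_or_ne i r
    · simp [mulVec_sub, mul_comm]
    · simp [mulVec_sub, hk i hi, hl i hi]
  have hzero := mulVec_injective_of_isUnit hL (hker.trans (mulVec_zero L).symm)
  exact hrk (by simpa [hkl.symm] using congrFun hzero l)

/-- Read row `r` of `L` as the image of `x_{r+1}` in degree one. The row is isolated if this image
kills the images of the other three generators in the commutative quotient of `R(c,d,q,1)` whose
degree-two part has the four squares and `x₂x₄` as a basis. -/
structure IsIsolatedRow (L : Matrix (Fin 4) (Fin 4) K) (r : Fin 4) : Prop where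
  diag : ∀ k, ∀ j ≠ r, L r k * L j k = 0
  polar : ∀ j ≠ r, L r 3 * L j 1 + L r 1 * L j 3 = 0

namespace IsIsolatedRow

variable {L : Matrix (Fin 4) (Fin 4) K} {r : Fin 4}

theorem apply_one_eq_zero (h : IsIsolatedRow L r) (hL : IsUnit L) : L r 1 = 0 :=
  apply_eq_zero_of_polar (l := 3) hL (by decide) (h.diag 1) fun j hj => by
    rw [add_comm, h.polar j hj]

theorem apply_three_eq_zero (h : IsIsolatedRow L r) (hL : IsUnit L) : L r 3 = 0 :=
  apply_eq_zero_of_polar (l := 1) hL (by decide) (h.diag 3) h.polar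

theorem apply_zero_or_apply_two_ne_zero (h : IsIsolatedRow L r) (hL : IsUnit L) :
    L r 0 ≠ 0 ∨ L r 2 ≠ 0 := by
  by_contra! h02
  refine (linearIndependent_rows_iff_isUnit.2 hL).ne_zero r (funext fun k => ?_)
  fin_cases k
  exacts [h02.1, h.apply_one_eq_zero hL, h02.2, h.apply_three_eq_zero hL]

theorem diag_or_antidiag (h₀ : IsIsolatedRow L 0) (h₂ : IsIsolatedRow L 2) (hL : IsUnit L) :
    (L 0 0 ≠ 0 ∧ L 2 2 ≠ 0 ∧ L 2 0 = 0) ∨ (L 0 2 ≠ 0 ∧ L 2 0 ≠ 0 ∧ L 2 2 = 0) := by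
  have h00 := h₀.diag 0 2 (by decide)
  have h02 := h₀.diag 2 2 (by decide)
  grind [h₀.apply_zero_or_apply_two_ne_zero hL, h₂.apply_zero_or_apply_two_ne_zero hL]

theorem apply_three_one_or_apply_three_three_ne_zero (h₀ : IsIsolatedRow L 0)
    (h₂ : IsIsolatedRow L 2) (hL : IsUnit L) : L 3 1 ≠ 0 ∨ L 3 3 ≠ 0 := by
  by_contra! h13
  have h0 (k) : L 0 k * L 3 k = 0 := h₀.diag k 3 (by decide)
  have h2 (k) : L 2 k * L 3 k = 0 := h₂.diag k 3 (by decide)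
  have h02 : L 3 0 = 0 ∧ L 3 2 = 0 := by grind [h₀.diag_or_antidiag h₂ hL]
  refine (linearIndependent_rows_iff_isUnit.2 hL).ne_zero 3 (funext fun k => ?_)
  fin_cases k
  exacts [h02.1, h13.1, h02.2, h13.2]

theorem not_isIsolatedRow_three (h₀ : IsIsolatedRow L 0) (h₂ : IsIsolatedRow L 2) (hL : IsUnit L) :
    ¬IsIsolatedRow L 3 := fun h₃ =>
  (h₀.apply_three_one_or_apply_three_three_ne_zero h₂ hL).elim (· (h₃.apply_one_eq_zero hL))
    (· (h₃.apply_three_eq_zero hL))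

end IsIsolatedRow

section Annihilators

variable (c d q q₂ : K)

theorem isAmbiskew_single_self (k : Fin 4) (e : K) : IsAmbiskew c d q q₂ (single k k e) := by
  fin_cases k <;> constructor <;> simp

theorem isAmbiskew_skewForm_three_one : IsAmbiskew c d q q₂ (skewForm 3 1 q₂) := by
  constructor <;> simp [skewForm]

theorem isAmbiskew_skewForm_zero_one : IsAmbiskew c d q q₂ (skewForm 0 1 (q⁻¹ * c⁻¹)) := by
  constructor <;> simp [skewForm]

theorem isAmbiskew_skewForm_zero_three : IsAmbiskew c d q q₂ (skewForm 0 3 c) := by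
  constructor <;> simp [skewForm]

theorem isAmbiskew_skewForm_two_one : IsAmbiskew c d q q₂ (skewForm 2 1 (q * d⁻¹)) := by
  constructor <;> simp [skewForm]

theorem isAmbiskew_skewForm_two_three : IsAmbiskew c d q q₂ (skewForm 2 3 d) := by
  constructor <;> simp [skewForm]

theorem isAmbiskew_skewForm_two_zero :
    IsAmbiskew c d q q₂ (skewForm 2 0 q + single 1 3 ((1 - q₂ * c * d) * q)) := by
  constructor <;> simp [skewForm]

theorem isAmbiskew_skewForm_zero_two {q : K} (hq : q ≠ 0) :
    IsAmbiskew c d q q₂ (skewForm 0 2 q⁻¹ + single 1 3 (1 - q₂ * c * d)) := by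
  constructor <;> simp [skewForm, hq]

end Annihilators

variable {a b p p₂ c d q q₂ : K}

namespace IsAmbiskew

variable {μ : Matrix (Fin 4) (Fin 4) K}

theorem apply_zero_eq_zero (h : IsAmbiskew a b p p₂ μ) (hμ : μ.IsSymm) (ha : a ≠ 1) (hp : p ≠ 1)
    (hpa : p * a ≠ 1) : ∀ j ≠ 0, μ 0 j = 0 := by
  have h01 : μ 0 1 = 0 := eq_zero_of_eq_smul_self (by rwa [← mul_inv, ne_eq, inv_eq_one])
    (hμ.apply 0 1 ▸ h.r21)
  have h02 : μ 0 2 = 0 := eq_zero_of_eq_smul_self hp (by simpa only [hμ.apply 0 2] using h.r13)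
  have h03 : μ 0 3 = 0 := eq_zero_of_eq_smul_self ha (hμ.apply 0 3 ▸ h.r41)
  intro j hj
  fin_cases j
  exacts [absurd rfl hj, h01, h02, h03]

theorem apply_two_eq_zero (h : IsAmbiskew a b p p₂ μ) (hμ : μ.IsSymm) (hb : b ≠ 1) (hp : p ≠ 1)
    (hpb : p * b⁻¹ ≠ 1) : ∀ j ≠ 2, μ 2 j = 0 := by
  have h20 : μ 2 0 = 0 := eq_zero_of_eq_smul_self hp (by simpa only [hμ.apply 2 0] using h.r13)
  have h21 : μ 2 1 = 0 := eq_zero_of_eq_smul_self hpb (hμ.apply 2 1 ▸ h.r23)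
  have h23 : μ 2 3 = 0 := eq_zero_of_eq_smul_self hb (hμ.apply 2 3 ▸ h.r43)
  intro j hj
  fin_cases j
  exacts [h20, h21, absurd rfl hj, h23]

theorem apply_three_eq_zero (h : IsAmbiskew a b p p₂ μ) (hμ : μ.IsSymm)
    (h₀ : ∀ j ≠ 0, μ 0 j = 0) (h₂ : ∀ j ≠ 2, μ 2 j = 0) (hp₂ : p₂ ≠ 1) : ∀ j ≠ 3, μ 3 j = 0 := by
  have h31 : μ 3 1 = 0 := eq_zero_of_eq_smul_self hp₂
    (by simpa [h₀ 2 (by decide), hμ.apply 3 1] using h.r24)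
  intro j hj
  fin_cases j
  exacts [hμ.apply 0 3 ▸ h₀ 3 (by decide), h31, hμ.apply 2 3 ▸ h₂ 3 (by decide), absurd rfl hj]

end IsAmbiskew

section Parameters

variable {L : Matrix (Fin 4) (Fin 4) K}
  (hpull : ∀ β, IsAmbiskew c d q q₂ β → IsAmbiskew a b p p₂ (L * β * Lᵀ))
include hpull

theorem parameters_eq_of_diag (h00 : L 0 0 ≠ 0) (h22 : L 2 2 ≠ 0) (h20 : L 2 0 = 0)
    (h₀ : L 0 1 = 0 ∧ L 0 3 = 0) (h₂ : L 2 1 = 0 ∧ L 2 3 = 0) (h₃ : L 3 1 ≠ 0 ∨ L 3 3 ≠ 0) :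
    (a = c ∧ b = d ∧ p = q) ∨ (a = q⁻¹ * c⁻¹ ∧ b = q * d⁻¹ ∧ p = q) := by
  have hpq : p = q := eq_of_mul_skewForm_mul_transpose_apply h20 h22 h00 <| by
    simpa [mul_add, add_mul, mul_single_mul_transpose_apply, h₀.1, h₂.1] using
      (hpull _ (isAmbiskew_skewForm_two_zero c d q q₂)).r13
  obtain h31 | h33 := h₃
  · refine .inr ⟨?_, ?_, hpq⟩
    · exact eq_of_mul_skewForm_mul_transpose_apply h₀.1 h00 h31
        (hpull _ (isAmbiskew_skewForm_zero_one c d q q₂)).r41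
    · exact eq_of_mul_skewForm_mul_transpose_apply h₂.1 h22 h31
        (hpull _ (isAmbiskew_skewForm_two_one c d q q₂)).r43
  · refine .inl ⟨?_, ?_, hpq⟩
    · exact eq_of_mul_skewForm_mul_transpose_apply h₀.2 h00 h33
        (hpull _ (isAmbiskew_skewForm_zero_three c d q q₂)).r41
    · exact eq_of_mul_skewForm_mul_transpose_apply h₂.2 h22 h33
        (hpull _ (isAmbiskew_skewForm_two_three c d q q₂)).r43

theorem parameters_eq_of_antidiag (hq : q ≠ 0) (h02 : L 0 2 ≠ 0) (h20 : L 2 0 ≠ 0) (h22 : L 2 2 = 0)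
    (h₀ : L 0 1 = 0 ∧ L 0 3 = 0) (h₂ : L 2 1 = 0 ∧ L 2 3 = 0) (h₃ : L 3 1 ≠ 0 ∨ L 3 3 ≠ 0) :
    (a = d ∧ b = c ∧ p = q⁻¹) ∨ (a = q * d⁻¹ ∧ b = q⁻¹ * c⁻¹ ∧ p = q⁻¹) := by
  have hpq : p = q⁻¹ := eq_of_mul_skewForm_mul_transpose_apply h22 h20 h02 <| by
    simpa [mul_add, add_mul, mul_single_mul_transpose_apply, h₀.1, h₂.1] using
      (hpull _ (isAmbiskew_skewForm_zero_two c d q₂ hq)).r13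
  obtain h31 | h33 := h₃
  · refine .inr ⟨?_, ?_, hpq⟩
    · exact eq_of_mul_skewForm_mul_transpose_apply h₀.1 h02 h31
        (hpull _ (isAmbiskew_skewForm_two_one c d q q₂)).r41
    · exact eq_of_mul_skewForm_mul_transpose_apply h₂.1 h20 h31
        (hpull _ (isAmbiskew_skewForm_zero_one c d q q₂)).r43
  · refine .inl ⟨?_, ?_, hpq⟩
    · exact eq_of_mul_skewForm_mul_transpose_apply h₀.2 h02 h33
        (hpull _ (isAmbiskew_skewForm_two_three c d q q₂)).r41
    · exact eq_of_mul_skewForm_mul_transpose_apply h₂.2 h20 h33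
        (hpull _ (isAmbiskew_skewForm_zero_three c d q q₂)).r43

end Parameters

section Pullback

variable {L : Matrix (Fin 4) (Fin 4) K}
  (hpull : ∀ β, IsAmbiskew c d q 1 β → IsAmbiskew a b p p₂ (L * β * Lᵀ))
include hpull

theorem isIsolatedRow_of_pullback {r : Fin 4}
    (h : ∀ {μ : Matrix (Fin 4) (Fin 4) K}, IsAmbiskew a b p p₂ μ → μ.IsSymm → ∀ j ≠ r, μ r j = 0) :
    IsIsolatedRow L r where
  diag k j hj := by
    simpa [mul_single_mul_transpose_apply] using
      h (hpull _ (isAmbiskew_single_self c d q 1 k 1))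
        (isSymm_mul_mul_transpose L (by simp [IsSymm])) j hj
  polar j hj := by
    simpa [mul_skewForm_mul_transpose_apply] using
      h (hpull _ (isAmbiskew_skewForm_three_one c d q 1))
        (isSymm_mul_mul_transpose L (by simp [IsSymm, skewForm, add_comm])) j hj

theorem isIsolatedRow_zero (ha : a ≠ 1) (hp : p ≠ 1) (hpa : p * a ≠ 1) : IsIsolatedRow L 0 :=
  isIsolatedRow_of_pullback hpull fun hμ hsymm => hμ.apply_zero_eq_zero hsymm ha hp hpa

theorem isIsolatedRow_two (hb : b ≠ 1) (hp : p ≠ 1) (hpb : p * b⁻¹ ≠ 1) : IsIsolatedRow L 2 :=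
  isIsolatedRow_of_pullback hpull fun hμ hsymm => hμ.apply_two_eq_zero hsymm hb hp hpb

theorem eq_one_of_pullback (hL : IsUnit L) (ha : a ≠ 1) (hb : b ≠ 1) (hp : p ≠ 1)
    (hpa : p * a ≠ 1) (hpb : p * b⁻¹ ≠ 1) : p₂ = 1 := by
  have h₀ := isIsolatedRow_zero hpull ha hp hpa
  have h₂ := isIsolatedRow_two hpull hb hp hpb
  by_contra hp₂
  refine h₀.not_isIsolatedRow_three h₂ hL <| isIsolatedRow_of_pullback hpull fun hμ hsymm => ?_
  exact hμ.apply_three_eq_zero hsymm (hμ.apply_zero_eq_zero hsymm ha hp hpa)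
    (hμ.apply_two_eq_zero hsymm hb hp hpb) hp₂

theorem parameters_eq_of_pullback (hL : IsUnit L) (hq : q ≠ 0) (ha : a ≠ 1) (hb : b ≠ 1)
    (hp : p ≠ 1) (hpa : p * a ≠ 1) (hpb : p * b⁻¹ ≠ 1) :
    (a = c ∧ b = d ∧ p = q) ∨ (a = q⁻¹ * c⁻¹ ∧ b = q * d⁻¹ ∧ p = q) ∨
      (a = d ∧ b = c ∧ p = q⁻¹) ∨ (a = q * d⁻¹ ∧ b = q⁻¹ * c⁻¹ ∧ p = q⁻¹) := by
  have h₀ := isIsolatedRow_zero hpull ha hp hpa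
  have h₂ := isIsolatedRow_two hpull hb hp hpb
  have hrow₀ := And.intro (h₀.apply_one_eq_zero hL) (h₀.apply_three_eq_zero hL)
  have hrow₂ := And.intro (h₂.apply_one_eq_zero hL) (h₂.apply_three_eq_zero hL)
  have hrow₃ := h₀.apply_three_one_or_apply_three_three_ne_zero h₂ hL
  rw [← or_assoc]
  obtain ⟨h00, h22, h20⟩ | ⟨h02, h20, h22⟩ := h₀.diag_or_antidiag h₂ hL
  · exact .inl (parameters_eq_of_diag hpull h00 h22 h20 hrow₀ hrow₂ hrow₃)
  · exact .inr (parameters_eq_of_antidiag hpull hq h02 h20 h22 hrow₀ hrow₂ hrow₃)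

end Pullback

end LinearAlgebra

theorem ambiskew_iso_classification_general {K : Type*} [Field K] {a b p c d q : Kˣ} {p₂ : K}
    (ha : (a : K) ≠ 1) (hb : (b : K) ≠ 1) (hp : (p : K) ≠ 1) (hpa : (p : K) * (a : K) ≠ 1)
    (hpb : (p : K) * (b : K)⁻¹ ≠ 1)
    {φ : Ambiskew K (a : K) (b : K) (p : K) p₂ →ₐ[K] Ambiskew K (c : K) (d : K) (q : K) 1}
    (hφ : Function.Surjective φ) :
    p₂ = 1 ∧ ((a = c ∧ b = d ∧ p = q) ∨
      (a = q⁻¹ * c⁻¹ ∧ b = q * d⁻¹ ∧ p = q) ∨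
      (a = d ∧ b = c ∧ p = q⁻¹) ∨
      (a = q * d⁻¹ ∧ b = q⁻¹ * c⁻¹ ∧ p = q⁻¹)) := by
  have hrows := linearIndependent_linearPart_row hφ
  have hL : IsUnit (linearPart φ) := Matrix.linearIndependent_rows_iff_isUnit.1 hrows
  have hpull (β) (hβ : IsAmbiskew (c : K) (d : K) (q : K) 1 β) :=
    hβ.linearPart_mul_mul_transpose (fst_truncation_map_agen ha hpb hrows)
  refine ⟨eq_one_of_pullback hpull hL ha hb hp hpa hpb, ?_⟩
  simpa only [Units.ext_iff, Units.val_mul, Units.val_inv_eq_inv_val] using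
    parameters_eq_of_pullback hpull hL q.ne_zero ha hb hp hpa hpb

/-- under genericity hypotheses on the parameters, an isomorphism
`R(a,b,p,1) ≅ R(c,d,q,1)` forces `(a,b,p)` to be one of `(c,d,q)`,
`(q⁻¹c⁻¹, qd⁻¹, q)`, `(d, c, q⁻¹)`, `(qd⁻¹, q⁻¹c⁻¹, q⁻¹)`. -/
theorem ambiskew_iso_classification (K : Type*) [Field K] (a b p c d q : Kˣ)
    (ha : (a : K) ≠ 1) (hb : (b : K) ≠ 1) (hab : (a : K) * (b : K) ≠ 1)
    (hp2 : (p : K) ^ 2 ≠ 1) (hpa : (p : K) * (a : K) ≠ 1)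
    (hpb : (p : K) * (b : K)⁻¹ ≠ 1) (hpa2 : (p : K) * (a : K) ^ 2 ≠ 1)
    (hpb2 : (p : K)⁻¹ * (b : K) ^ 2 ≠ 1)
    (hc : (c : K) ≠ 1) (hd : (d : K) ≠ 1) (hcd : (c : K) * (d : K) ≠ 1)
    (hq2 : (q : K) ^ 2 ≠ 1) (hqc : (q : K) * (c : K) ≠ 1)
    (hqd : (q : K) * (d : K)⁻¹ ≠ 1) (hqc2 : (q : K) * (c : K) ^ 2 ≠ 1)
    (hqd2 : (q : K)⁻¹ * (d : K) ^ 2 ≠ 1)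
    (h : Nonempty (Ambiskew K (a : K) (b : K) (p : K) 1 ≃ₐ[K]
      Ambiskew K (c : K) (d : K) (q : K) 1)) :
    (a = c ∧ b = d ∧ p = q) ∨
    (a = q⁻¹ * c⁻¹ ∧ b = q * d⁻¹ ∧ p = q) ∨
    (a = d ∧ b = c ∧ p = q⁻¹) ∨
    (a = q * d⁻¹ ∧ b = q⁻¹ * c⁻¹ ∧ p = q⁻¹) := by
  obtain ⟨e⟩ := h
  have hp : (p : K) ≠ 1 := fun hp => hp2 (by rw [hp, one_pow])
  exact (ambiskew_iso_classification_general ha hb hp hpa hpb (φ := e.toAlgHom) e.surjective).2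
end

section
/- Let K be a field and c, d, q₁, q₂ ∈ Kˣ. The Jordan matrix algebra O_J(M_2(K)) is not isomorphic to R(c, d, q₁, q₂) as a K-algebra. -/
/-- The defining relations of the Jordan matrix algebra `O_J(M₂(K))`, with
generators `x₁ = ι 0`, `x₂ = ι 1`, `x₃ = ι 2`, `x₄ = ι 3`. Each of the six
defining expressions is set equal to `0`. -/
inductive JordanMatRel (K : Type*) [Field K] :
    FreeAlgebra K (Fin 4) → FreeAlgebra K (Fin 4) → Prop
  | r1 : JordanMatRel K
      (FreeAlgebra.ι K 0 * FreeAlgebra.ι K 2 - FreeAlgebra.ι K 2 * FreeAlgebra.ι K 0 +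
        FreeAlgebra.ι K 2 * FreeAlgebra.ι K 2) 0
  | r2 : JordanMatRel K
      (FreeAlgebra.ι K 0 * FreeAlgebra.ι K 1 - FreeAlgebra.ι K 1 * FreeAlgebra.ι K 0 -
        FreeAlgebra.ι K 0 * FreeAlgebra.ι K 2 + FreeAlgebra.ι K 0 * FreeAlgebra.ι K 3 -
        FreeAlgebra.ι K 1 * FreeAlgebra.ι K 2 - FreeAlgebra.ι K 0 * FreeAlgebra.ι K 0) 0
  | r3 : JordanMatRel K
      (FreeAlgebra.ι K 3 * FreeAlgebra.ι K 2 - FreeAlgebra.ι K 2 * FreeAlgebra.ι K 3 +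
        FreeAlgebra.ι K 2 * FreeAlgebra.ι K 2) 0
  | r4 : JordanMatRel K
      (FreeAlgebra.ι K 1 * FreeAlgebra.ι K 3 - FreeAlgebra.ι K 3 * FreeAlgebra.ι K 1 +
        FreeAlgebra.ι K 0 * FreeAlgebra.ι K 2 - FreeAlgebra.ι K 0 * FreeAlgebra.ι K 3 +
        FreeAlgebra.ι K 1 * FreeAlgebra.ι K 2 + FreeAlgebra.ι K 3 * FreeAlgebra.ι K 3) 0
  | r5 : JordanMatRel K
      (FreeAlgebra.ι K 1 * FreeAlgebra.ι K 2 - FreeAlgebra.ι K 2 * FreeAlgebra.ι K 1 +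
        FreeAlgebra.ι K 0 * FreeAlgebra.ι K 2 + FreeAlgebra.ι K 2 * FreeAlgebra.ι K 3) 0
  | r6 : JordanMatRel K
      (FreeAlgebra.ι K 0 * FreeAlgebra.ι K 3 - FreeAlgebra.ι K 3 * FreeAlgebra.ι K 0 -
        FreeAlgebra.ι K 0 * FreeAlgebra.ι K 2 + FreeAlgebra.ι K 2 * FreeAlgebra.ι K 3 -
        FreeAlgebra.ι K 2 * FreeAlgebra.ι K 2) 0

/-- The Jordan matrix algebra `O_J(M₂(K))`. -/
abbrev JordanMat (K : Type*) [Field K] := RingQuot (JordanMatRel K)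

/-!
Every homomorphism from `O_J(M₂(K))` to a commutative reduced algebra kills `x₃`, because the
relation `[x₁, x₃] + x₃² = 0` becomes `x₃² = 0`. The ring `R(a,b,p₁,p₂)` maps onto each coordinate
axis of four-dimensional affine space, that is onto `K[X]`, and the tangent directions of the axes
at the origin span `K⁴`. Under an isomorphism, the linear parts of the images of the four generators
of `O_J(M₂(K))` would span `K⁴` as well, hence be linearly independent; but the linear part of the
image of `x₃` vanishes, because that image vanishes on every axis.
-/

section Generation

variable {R A M ι : Type*} [CommSemiring R]

theorem adjoin_range_mkAlgHom_ι
    (r : FreeAlgebra R ι → FreeAlgebra R ι → Prop) :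
    Algebra.adjoin R (Set.range fun i => RingQuot.mkAlgHom R r (FreeAlgebra.ι R i)) = ⊤ := by
  rw [Set.range_comp' (RingQuot.mkAlgHom R r), ← AlgHom.map_adjoin,
    FreeAlgebra.adjoin_range_ι, Algebra.map_top, AlgHom.range_eq_top]
  exact RingQuot.mkAlgHom_surjective R r

variable [Semiring A] [Algebra R A]
  [AddCommMonoid M] [Module R M] [Module Rᵐᵒᵖ M] [IsCentralScalar R M]

theorem snd_mem_span_of_mem_adjoin {s : Set (TrivSqZeroExt R M)} {z : TrivSqZeroExt R M}
    (hz : z ∈ Algebra.adjoin R s) : z.snd ∈ Submodule.span R (TrivSqZeroExt.snd '' s) := by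
  induction hz using Algebra.adjoin_induction with
  | mem z hz => exact Submodule.subset_span (Set.mem_image_of_mem _ hz)
  | algebraMap _ => simp [TrivSqZeroExt.algebraMap_eq_inl]
  | add z w _ _ hz hw => simpa only [TrivSqZeroExt.snd_add] using Submodule.add_mem _ hz hw
  | mul z w _ _ hz hw =>
    rw [TrivSqZeroExt.snd_mul, op_smul_eq_smul]
    exact Submodule.add_mem _ (Submodule.smul_mem _ _ hw) (Submodule.smul_mem _ _ hz)

theorem span_range_snd_eq_top {x : ι → A} (hx : Algebra.adjoin R (Set.range x) = ⊤)
    {f : A →ₐ[R] TrivSqZeroExt R M} (hf : Function.Surjective f) :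
    Submodule.span R (Set.range fun i => (f (x i)).snd) = ⊤ := by
  refine Submodule.eq_top_iff'.mpr fun m => ?_
  have hm : TrivSqZeroExt.inr m ∈ Algebra.adjoin R (Set.range fun i => f (x i)) := by
    rw [Set.range_comp' f, ← AlgHom.map_adjoin, hx, Algebra.map_top,
      (AlgHom.range_eq_top f).mpr hf]
    exact Algebra.mem_top
  simpa only [← Set.range_comp', TrivSqZeroExt.snd_inr] using snd_mem_span_of_mem_adjoin hm

end Generation

namespace JordanMat

variable {K B : Type*} [Field K]

variable (K) in
/-- The images of the four free generators in `O_J(M₂(K))`, indexed as in `agen`: `gen K i` is the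
generator `x_{i+1}`. -/
noncomputable def gen (i : Fin 4) : JordanMat K :=
  RingQuot.mkAlgHom K (JordanMatRel K) (FreeAlgebra.ι K i)

theorem adjoin_range_gen : Algebra.adjoin K (Set.range (gen K)) = ⊤ :=
  adjoin_range_mkAlgHom_ι (JordanMatRel K)

theorem gen_two_mul_gen_two : gen K 2 * gen K 2 = gen K 2 * gen K 0 - gen K 0 * gen K 2 := by
  have hrel : gen K 0 * gen K 2 - gen K 2 * gen K 0 + gen K 2 * gen K 2 = 0 := by
    simpa only [gen, map_add, map_sub, map_mul, map_zero] using
      RingQuot.mkAlgHom_rel K (JordanMatRel.r1 (K := K))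
  rw [eq_neg_of_add_eq_zero_right hrel, neg_sub]

theorem map_gen_two_eq_zero [CommRing B] [IsReduced B] [Algebra K B] (f : JordanMat K →ₐ[K] B) :
    f (gen K 2) = 0 := by
  have hsq : f (gen K 2) ^ 2 = 0 := by
    rw [sq, ← map_mul, gen_two_mul_gen_two, map_sub, map_mul, map_mul, mul_comm, sub_self]
  exact eq_zero_of_pow_eq_zero hsq

end JordanMat

namespace Ambiskew

open Polynomial

variable {K B : Type*} [Field K] {a b p₁ p₂ : K}

theorem adjoin_range_agen : Algebra.adjoin K (Set.range (agen K a b p₁ p₂)) = ⊤ :=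
  adjoin_range_mkAlgHom_ι (AmbRel K a b p₁ p₂)

section LiftOrthogonal

variable [Semiring B] [Algebra K B]

/-- The homomorphism from `R(a,b,p₁,p₂)` sending the generators to given elements whose products
with distinct indices vanish: such elements satisfy the defining relations for all values of the
parameters, since no relation contains a square of a generator. -/
noncomputable def liftOrthogonal (y : Fin 4 → B) (hy : Pairwise fun i j => y i * y j = 0) :
    Ambiskew K a b p₁ p₂ →ₐ[K] B :=
  RingQuot.liftAlgHom K ⟨FreeAlgebra.lift K y, fun _ _ h => by
    have hy' : ∀ i j, i ≠ j → y i * y j = 0 := fun _ _ hij => hy hij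
    cases h <;> simp [hy']⟩

theorem liftOrthogonal_agen (y : Fin 4 → B) (hy : Pairwise fun i j => y i * y j = 0) (i : Fin 4) :
    liftOrthogonal y hy (agen K a b p₁ p₂ i) = y i := by
  simp [liftOrthogonal, agen]

end LiftOrthogonal

/-- Restriction of `R(a,b,p₁,p₂)` to the `i`-th coordinate axis: the generator with index `i` goes
to `X`, the other three to `0`. -/
noncomputable def axis (i : Fin 4) : Ambiskew K a b p₁ p₂ →ₐ[K] K[X] :=
  liftOrthogonal (Pi.single i X) fun j k hjk => by
    rcases eq_or_ne j i with rfl | hj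
    · simp [hjk.symm]
    · simp [hj]

/-- The first-order expansion of `R(a,b,p₁,p₂)` at the origin: the scalar part of the value is the
constant term, the square-zero part is the vector of coefficients of the four generators. -/
noncomputable def tangent : Ambiskew K a b p₁ p₂ →ₐ[K] TrivSqZeroExt K (Fin 4 → K) :=
  liftOrthogonal (fun i => TrivSqZeroExt.inr (Pi.single i 1)) fun _ _ _ =>
    TrivSqZeroExt.inr_mul_inr K _ _

theorem axis_agen (i j : Fin 4) :
    axis i (agen K a b p₁ p₂ j) = (Pi.single i X : Fin 4 → K[X]) j :=
  liftOrthogonal_agen _ _ j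

theorem tangent_agen (i : Fin 4) :
    tangent (agen K a b p₁ p₂ i) = TrivSqZeroExt.inr (Pi.single i 1) :=
  liftOrthogonal_agen _ _ i

theorem tangent_surjective : Function.Surjective (tangent : Ambiskew K a b p₁ p₂ →ₐ[K] _) := by
  intro z
  refine ⟨algebraMap K _ z.fst + ∑ i, z.snd i • agen K a b p₁ p₂ i, ?_⟩
  have hsnd : ∑ i, z.snd i • (TrivSqZeroExt.inr (Pi.single i 1) : TrivSqZeroExt K (Fin 4 → K)) =
      TrivSqZeroExt.inr z.snd := by
    simp only [← TrivSqZeroExt.inr_smul]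
    rw [← TrivSqZeroExt.inr_sum, ← pi_eq_sum_univ']
  simp only [map_add, map_sum, map_smul, AlgHom.commutes, tangent_agen, hsnd,
    TrivSqZeroExt.algebraMap_eq_inl, TrivSqZeroExt.inl_fst_add_inr_snd_eq]

theorem map_proj_comp_tangent (i : Fin 4) :
    (TrivSqZeroExt.map (LinearMap.proj i)).comp (tangent : Ambiskew K a b p₁ p₂ →ₐ[K] _) =
      (aeval (DualNumber.eps : DualNumber K)).comp (axis i) := by
  refine AlgHom.ext_of_adjoin_eq_top adjoin_range_agen ?_
  rintro _ ⟨j, rfl⟩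
  rcases eq_or_ne j i with rfl | hj
  · simp [tangent_agen, axis_agen, DualNumber.inr_eq_smul_eps]
  · simp [tangent_agen, axis_agen, hj]

theorem snd_tangent_eq_zero {r : Ambiskew K a b p₁ p₂} (hr : ∀ i, axis i r = 0) :
    (tangent r).snd = 0 := by
  funext i
  have h := DFunLike.congr_fun (map_proj_comp_tangent i) r
  simpa [hr i] using congrArg TrivSqZeroExt.snd h

end Ambiskew

/-- the Jordan matrix algebra `O_J(M₂(K))` is not isomorphic to
any of the ambiskew polynomial rings `R(c,d,q₁,q₂)`. -/
theorem jordanMat_not_iso_ambiskew (K : Type*) [Field K] (c d q₁ q₂ : Kˣ) :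
    IsEmpty (JordanMat K ≃ₐ[K] Ambiskew K (c : K) (d : K) (q₁ : K) (q₂ : K)) := by
  refine ⟨fun φ => ?_⟩
  let f : JordanMat K →ₐ[K] TrivSqZeroExt K (Fin 4 → K) := Ambiskew.tangent.comp φ.toAlgHom
  have hf : Function.Surjective f := Ambiskew.tangent_surjective.comp φ.surjective
  have hspan : Submodule.span K (Set.range fun i => (f (JordanMat.gen K i)).snd) = ⊤ :=
    span_range_snd_eq_top JordanMat.adjoin_range_gen hf
  have hindep : LinearIndependent K fun i => (f (JordanMat.gen K i)).snd :=
    linearIndependent_of_top_le_span_of_card_eq_finrank hspan.ge (by simp)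
  have hx₃ : (f (JordanMat.gen K 2)).snd = 0 := Ambiskew.snd_tangent_eq_zero fun i =>
    JordanMat.map_gen_two_eq_zero ((Ambiskew.axis i).comp φ.toAlgHom)
  exact hindep.ne_zero 2 hx₃
end

section
/- Let K be a field and p, q ∈ Kˣ with p = q⁻¹. Then the quantum Weyl algebras A_1^p(K) and A_1^q(K) are isomorphic as K-algebras; an isomorphism is given by sending the generator X of A_1^p(K) to q·y and the generator Y to −x, where x, y are the generators of A_1^q(K). -/
/-- The defining relation of the quantum Weyl algebra `A_1^q(K)`:
`x * y = q • (y * x) + 1`, where `x, y` are the two free generators. -/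
inductive WeylRel (K : Type*) [Field K] (q : K) :
    FreeAlgebra K (Fin 2) → FreeAlgebra K (Fin 2) → Prop
  | rel : WeylRel K q (FreeAlgebra.ι K 0 * FreeAlgebra.ι K 1)
      (q • (FreeAlgebra.ι K 1 * FreeAlgebra.ι K 0) + 1)

/-- The quantum Weyl algebra `A_1^q(K)`. -/
abbrev QuantumWeyl (K : Type*) [Field K] (q : K) := RingQuot (WeylRel K q)

/-- The images of the two free generators in `A_1^q(K)`; `wgen K q 0` is `x`
and `wgen K q 1` is `y`. -/
noncomputable def wgen (K : Type*) [Field K] (q : K) (i : Fin 2) : QuantumWeyl K q :=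
  RingQuot.mkAlgHom K (WeylRel K q) (FreeAlgebra.ι K i)

/-!
If `x * y = q • (y * x) + 1`, then `-q • (y * x) = -(x * y) + 1`, which says that `u • y` and
`v • x` satisfy the same relation with `q` replaced by `q⁻¹` whenever `u * v = -q`. Interchanging
the generators up to such scalars thus gives homomorphisms in both directions between the algebras
for `q` and `q⁻¹`, and the scalars `(q, -1)` and `(-1, q⁻¹)` give mutually inverse ones.
-/

theorem smul_mul_smul_swap_of_mul_eq {R A : Type*} [CommRing R] [Ring A] [Algebra R A]
    {p q u v : R} {a b : A} (hpq : p * q = 1) (huv : u * v = -q)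
    (hab : a * b = q • (b * a) + 1) :
    (u • b) * (v • a) = p • ((v • a) * (u • b)) + 1 :=
  calc
    (u • b) * (v • a) = -(q • (b * a)) := by rw [smul_mul_smul_comm, huv, neg_smul]
    _ = -(a * b) + 1 := by rw [hab, neg_add, neg_add_cancel_right]
    _ = p • ((v • a) * (u • b)) + 1 := by
      rw [smul_mul_smul_comm, mul_comm v u, huv, smul_smul, mul_neg, hpq, neg_one_smul]

namespace QuantumWeyl

variable {K : Type*} [Field K]

theorem wgen_zero_mul_wgen_one (q : K) :
    wgen K q 0 * wgen K q 1 = q • (wgen K q 1 * wgen K q 0) + 1 := by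
  simpa [wgen] using RingQuot.mkAlgHom_rel K (WeylRel.rel (K := K) (q := q))

section Lift

variable {q : K} {A : Type*} [Semiring A] [Algebra K A]

/-- The universal property of `A_1^q(K)`: elements `a, b` of a `K`-algebra satisfying the defining
relation determine the algebra homomorphism with `x ↦ a` and `y ↦ b`. -/
noncomputable def lift (a b : A) (hab : a * b = q • (b * a) + 1) : QuantumWeyl K q →ₐ[K] A :=
  RingQuot.liftAlgHom K ⟨FreeAlgebra.lift K ![a, b], by rintro _ _ ⟨⟩; simpa using hab⟩

@[simp]
theorem lift_wgen_zero (a b : A) (hab : a * b = q • (b * a) + 1) :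
    lift a b hab (wgen K q 0) = a := by
  simp [lift, wgen]

@[simp]
theorem lift_wgen_one (a b : A) (hab : a * b = q • (b * a) + 1) :
    lift a b hab (wgen K q 1) = b := by
  simp [lift, wgen]

theorem algHom_ext {f g : QuantumWeyl K q →ₐ[K] A} (h₀ : f (wgen K q 0) = g (wgen K q 0))
    (h₁ : f (wgen K q 1) = g (wgen K q 1)) : f = g :=
  RingQuot.ringQuot_ext' _ _ _ <| FreeAlgebra.hom_ext <| funext <| Fin.forall_fin_two.2 ⟨h₀, h₁⟩

end Lift

section Swap

variable {p q : K}

/-- The homomorphism `A_1^p(K) → A_1^q(K)`, for `p = q⁻¹`, that interchanges the generators up to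
scalars: `x ↦ u • y` and `y ↦ v • x`, where `u * v = -q`. -/
noncomputable def swapHom (u v : K) (hpq : p * q = 1) (huv : u * v = -q) :
    QuantumWeyl K p →ₐ[K] QuantumWeyl K q :=
  lift (u • wgen K q 1) (v • wgen K q 0)
    (smul_mul_smul_swap_of_mul_eq hpq huv (wgen_zero_mul_wgen_one q))

@[simp]
theorem swapHom_wgen_zero (u v : K) (hpq : p * q = 1) (huv : u * v = -q) :
    swapHom u v hpq huv (wgen K p 0) = u • wgen K q 1 :=
  lift_wgen_zero _ _ _

@[simp]
theorem swapHom_wgen_one (u v : K) (hpq : p * q = 1) (huv : u * v = -q) :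
    swapHom u v hpq huv (wgen K p 1) = v • wgen K q 0 :=
  lift_wgen_one _ _ _

theorem swapHom_comp_swapHom_eq_id {u v u' v' : K} (hpq : p * q = 1) (huv : u * v = -q)
    (hqp : q * p = 1) (huv' : u' * v' = -p) (huv₁ : u * v' = 1) (hvu₁ : v * u' = 1) :
    (swapHom u' v' hqp huv').comp (swapHom u v hpq huv) = AlgHom.id K (QuantumWeyl K p) := by
  apply algHom_ext
  · simp [smul_smul, huv₁]
  · simp [smul_smul, hvu₁]

end Swap

end QuantumWeyl

/-- if `p = q⁻¹` then `A_1^p(K) ≅ A_1^q(K)`, via `X ↦ q·y`, `Y ↦ -x`. -/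
theorem quantumWeyl_iso_of_inv (K : Type*) [Field K] (p q : Kˣ) (h : p = q⁻¹) :
    ∃ Φ : QuantumWeyl K (p : K) ≃ₐ[K] QuantumWeyl K (q : K),
      Φ (wgen K (p : K) 0) = (q : K) • wgen K (q : K) 1 ∧
      Φ (wgen K (p : K) 1) = - wgen K (q : K) 0 := by
  have hpq : (p : K) * q = 1 := by simp [h]
  have hqp : (q : K) * p = 1 := by simp [h]
  have huv : (q : K) * -1 = -q := mul_neg_one _
  have huv' : -1 * (p : K) = -p := neg_one_mul _
  have hneg : (-1 : K) * -1 = 1 := by simp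
  refine ⟨AlgEquiv.ofAlgHom
    (QuantumWeyl.swapHom (q : K) (-1) hpq huv) (QuantumWeyl.swapHom (-1) (p : K) hqp huv')
    (QuantumWeyl.swapHom_comp_swapHom_eq_id hqp huv' hpq huv hneg hpq)
    (QuantumWeyl.swapHom_comp_swapHom_eq_id hpq huv hqp huv' hqp hneg), ?_, ?_⟩
  · exact QuantumWeyl.swapHom_wgen_zero _ _ hpq huv
  · exact (QuantumWeyl.swapHom_wgen_one _ _ hpq huv).trans (neg_one_smul K (wgen K (q : K) 0))
end

section
/- Let K be a field, let R and S be affine connected ℕ-graded K-algebras generated in degree 1, and let Φ : R → S be a K-algebra isomorphism (not assumed to respect the gradings). Suppose x, y ∈ R₁ are nonzero elements satisfying x·y = p·y·x for some p ∈ Kˣ with p ≠ 1. Then the degree-0 homogeneous components of Φ(x) and of Φ(y) are both zero. -/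
/-!
Let `n` be minimal among the degrees in which `v` has a nonzero component. Any contribution to the
degree `n` components of `u * v` and `v * u` other than `u₀ * vₙ` and `vₙ * u₀` would involve a
component of `v` of smaller degree. Since `u₀` is a scalar, both components are equal to `u₀ • vₙ`,
and `u * v = p • (v * u)` becomes `u₀ • vₙ = p • u₀ • vₙ`; as `p ≠ 1`, this forces `u₀ = 0`.
Exchanging the roles of `u` and `v` gives `v₀ = 0`.
-/

section Decomposition

variable {ι M σ : Type*} [DecidableEq ι] [AddCommMonoid M] [SetLike σ M] [AddSubmonoidClass σ M]
  (ℳ : ι → σ) [DirectSum.Decomposition ℳ]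

open DirectSum

lemma exists_decompose_ne_zero {x : M} (hx : x ≠ 0) : ∃ i, decompose ℳ x i ≠ 0 := by
  contrapose! hx
  apply (decompose ℳ).injective
  rw [decompose_zero]
  exact DFinsupp.ext hx

end Decomposition

section GradedRing

variable {ι A σ : Type*} [DecidableEq ι] [Semiring A] [SetLike σ A] [AddSubmonoidClass σ A]
  (𝒜 : ι → σ) {a b : A}

open DirectSum

lemma coe_decompose_mul_eq_mul_of_forall_ne [AddMonoid ι] [GradedRing 𝒜] {i j n : ι}
    (hij : i + j = n)
    (h : ∀ k l, k + l = n → (k, l) ≠ (i, j) → (decompose 𝒜 a k * decompose 𝒜 b l : A) = 0) :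
    (decompose 𝒜 (a * b) n : A) = decompose 𝒜 a i * decompose 𝒜 b j := by
  classical
  rw [decompose_mul, coe_mul_apply]
  refine Finset.sum_eq_single (i, j) (fun kl hkl hne ↦ h _ _ (Finset.mem_filter.1 hkl).2 hne) ?_
  intro hnot
  by_contra hne
  have hi : decompose 𝒜 a i ≠ 0 := fun h0 ↦ hne (by simp [h0])
  have hj : decompose 𝒜 b j ≠ 0 := fun h0 ↦ hne (by simp [h0])
  exact hnot (by simp [hi, hj, hij])

variable [AddCommMonoid ι] [PartialOrder ι] [IsOrderedCancelAddMonoid ι] [CanonicallyOrderedAdd ι]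
  [GradedRing 𝒜] {n : ι}

lemma coe_decompose_mul_of_right_eq_zero_of_lt (hb : ∀ j < n, decompose 𝒜 b j = 0) :
    (decompose 𝒜 (a * b) n : A) = decompose 𝒜 a 0 * decompose 𝒜 b n := by
  refine coe_decompose_mul_eq_mul_of_forall_ne 𝒜 (zero_add n) ?_
  rintro k l rfl hne
  have hk : k ≠ 0 := by rintro rfl; simp at hne
  rw [hb l (lt_add_of_pos_left l (pos_iff_ne_zero.2 hk)), ZeroMemClass.coe_zero, mul_zero]

lemma coe_decompose_mul_of_left_eq_zero_of_lt (ha : ∀ i < n, decompose 𝒜 a i = 0) :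
    (decompose 𝒜 (a * b) n : A) = decompose 𝒜 a n * decompose 𝒜 b 0 := by
  refine coe_decompose_mul_eq_mul_of_forall_ne 𝒜 (add_zero n) ?_
  rintro k l rfl hne
  have hl : l ≠ 0 := by rintro rfl; simp at hne
  rw [ha k (lt_add_of_pos_right k (pos_iff_ne_zero.2 hl)), ZeroMemClass.coe_zero, zero_mul]

end GradedRing

section GradedAlgebra

variable {ι K A : Type*} [DecidableEq ι] [AddCommMonoid ι] [PartialOrder ι]
  [IsOrderedCancelAddMonoid ι] [CanonicallyOrderedAdd ι] [WellFoundedLT ι]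
  [CommRing K] [IsDomain K] [Ring A] [Algebra K A] [Module.IsTorsionFree K A]
  (𝒜 : ι → Submodule K A) [GradedAlgebra 𝒜] {u v : A}

open DirectSum

lemma decompose_zero_eq_zero_of_smul_mul_eq_smul_mul (h𝒜 : 𝒜 0 = 1) (hv : v ≠ 0) {p q : K}
    (hpq : p ≠ q) (h : p • (u * v) = q • (v * u)) : decompose 𝒜 u 0 = 0 := by
  obtain ⟨n, hn⟩ := exists_minimal_of_wellFoundedLT _ (exists_decompose_ne_zero 𝒜 hv)
  have hlt : ∀ j < n, decompose 𝒜 v j = 0 := fun j hj ↦ not_not.1 (hn.not_prop_of_lt hj)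
  obtain ⟨c, hc⟩ : ∃ c, algebraMap K A c = decompose 𝒜 u 0 :=
    Submodule.mem_one.1 (h𝒜.le (decompose 𝒜 u 0).2)
  have huv : decompose 𝒜 (u * v) n = c • decompose 𝒜 v n := by
    ext
    rw [coe_decompose_mul_of_right_eq_zero_of_lt 𝒜 hlt, ← hc, ← Algebra.smul_def,
      Submodule.coe_smul]
  have hvu : decompose 𝒜 (v * u) n = c • decompose 𝒜 v n := by
    ext
    rw [coe_decompose_mul_of_left_eq_zero_of_lt 𝒜 hlt, ← hc, ← Algebra.commutes,
      ← Algebra.smul_def, Submodule.coe_smul]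
  have hpqc : p • c • decompose 𝒜 v n = q • c • decompose 𝒜 v n :=
    calc
      p • c • decompose 𝒜 v n = decompose 𝒜 (p • (u * v)) n := by
        rw [decompose_smul, DirectSum.smul_apply, huv]
      _ = decompose 𝒜 (q • (v * u)) n := by rw [h]
      _ = q • c • decompose 𝒜 v n := by rw [decompose_smul, DirectSum.smul_apply, hvu]
  have hc0 : c = 0 := by
    by_contra hc0
    exact hpq ((smul_left_inj (smul_ne_zero hc0 hn.prop)).1 hpqc)
  ext
  rw [← hc, hc0, map_zero, ZeroMemClass.coe_zero]

theorem degree_zero_component_eq_zero_general (h𝒜 : 𝒜 0 = 1) (hu : u ≠ 0) (hv : v ≠ 0) {p : K}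
    (hp : p ≠ 1) (huv : u * v = p • (v * u)) :
    decompose 𝒜 u 0 = 0 ∧ decompose 𝒜 v 0 = 0 :=
  ⟨decompose_zero_eq_zero_of_smul_mul_eq_smul_mul 𝒜 h𝒜 hv hp.symm (by rwa [one_smul]),
    decompose_zero_eq_zero_of_smul_mul_eq_smul_mul 𝒜 h𝒜 hu hp (by rw [one_smul, huv])⟩

end GradedAlgebra

/-- let `R, S` be affine connected ℕ-graded `K`-algebras
generated in degree 1, and let `Φ : R → S` be a `K`-algebra isomorphism (not
necessarily graded).  If `x, y ∈ R₁` are nonzero with `x·y = p·(y·x)` for some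
unit `p ≠ 1` of `K`, then the degree-0 homogeneous components of `Φ(x)` and
`Φ(y)` are both zero. -/
theorem degree_zero_component_eq_zero (K : Type*) [Field K]
    (R S : Type*) [Ring R] [Ring S] [Algebra K R] [Algebra K S]
    (𝒜 : ℕ → Submodule K R) (ℬ : ℕ → Submodule K S)
    [GradedAlgebra 𝒜] [GradedAlgebra ℬ]
    (hR0 : 𝒜 0 = 1) (hS0 : ℬ 0 = 1)
    (hRaff : FiniteDimensional K (𝒜 1)) (hSaff : FiniteDimensional K (ℬ 1))
    (hRgen : Algebra.adjoin K (𝒜 1 : Set R) = ⊤)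
    (hSgen : Algebra.adjoin K (ℬ 1 : Set S) = ⊤)
    (Φ : R ≃ₐ[K] S)
    (x y : R) (hx : x ∈ 𝒜 1) (hy : y ∈ 𝒜 1) (hx0 : x ≠ 0) (hy0 : y ≠ 0)
    (p : Kˣ) (hp : (p : K) ≠ 1) (hxy : x * y = (p : K) • (y * x)) :
    (DirectSum.decompose ℬ (Φ x) 0 : ℬ 0) = 0 ∧
    (DirectSum.decompose ℬ (Φ y) 0 : ℬ 0) = 0 := by
  exact degree_zero_component_eq_zero_general ℬ hS0 (by simpa using hx0) (by simpa using hy0) hp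
    (by rw [← map_mul, hxy, map_smul, map_mul])
end
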